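/- arXiv:2204.04755 — 10 statements merged into one kernel-verified Lean document; each statement's English description precedes it below -/
import Mathlib

section
/- Let F be a finite field with |F| = q. The symplectic graph Sp(4,q) is a strongly regular graph with parameters (q³+q²+q+1, q²+q, q−1, q+1). -/
open scoped Classical LinearAlgebra.Projectivization

/-- The symplectic form on `F^4` given by `u₀w₁ − u₁w₀ + u₂w₃ − u₃w₂`. -/
def sympForm {F : Type} [Field F] (u w : Fin 4 → F) : F :=
  u 0 * w 1 - u 1 * w 0 + u 2 * w 3 - u 3 * w 2

/-- The symplectic graph `Sp(4,q)`: vertices are the points of `PG(3,q)`, two distinct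
points being adjacent iff (representatives of) them pair to zero under the symplectic form.
(The condition is independent of the chosen representatives, so using `rep` is harmless.) -/
def spGraph (F : Type) [Field F] : SimpleGraph (ℙ F (Fin 4 → F)) :=
  SimpleGraph.fromRel (fun x y => sympForm x.rep y.rep = 0)

noncomputable instance (F : Type) [Field F] [Fintype F] : Fintype (ℙ F (Fin 4 → F)) :=
  have : Finite (ℙ F (Fin 4 → F)) := Quotient.finite _
  Fintype.ofFinite _

def spBil (F : Type) [Field F] : LinearMap.BilinForm F (Fin 4 → F) :=
  LinearMap.mk₂ F sympForm
    (by intros; simp only [sympForm, Pi.add_apply]; ring)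
    (by intros; simp only [sympForm, Pi.smul_apply, smul_eq_mul]; ring)
    (by intros; simp only [sympForm, Pi.add_apply]; ring)
    (by intros; simp only [sympForm, Pi.smul_apply, smul_eq_mul]; ring)

lemma spBil_apply {F : Type} [Field F] (u w : Fin 4 → F) : spBil F u w = sympForm u w := rfl

lemma sympForm_swap {F : Type} [Field F] (u w : Fin 4 → F) : sympForm u w = - sympForm w u := by
  simp only [sympForm]; ring

lemma sympForm_self {F : Type} [Field F] (u : Fin 4 → F) : sympForm u u = 0 := by
  simp only [sympForm]; ring

lemma spBil_refl (F : Type) [Field F] : (spBil F).IsRefl := by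
  intro u w h
  rw [spBil_apply] at *
  rw [sympForm_swap, h, neg_zero]

lemma spBil_nondeg (F : Type) [Field F] : (spBil F).Nondegenerate := by
  refine (LinearMap.IsRefl.nondegenerate_iff_separatingLeft (spBil_refl F)).2 ?_
  intro u h
  have h0 := h (Pi.single 0 1)
  have h1 := h (Pi.single 1 1)
  have h2 := h (Pi.single 2 1)
  have h3 := h (Pi.single 3 1)
  simp [spBil_apply, sympForm] at h0 h1 h2 h3
  funext i
  fin_cases i <;> simp [*]

lemma card_proj_submodule {F : Type} [Field F] [Fintype F] (W : Submodule F (Fin 4 → F)) {n : ℕ}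
    (h : Module.finrank F W = n) :
    Set.ncard {p : ℙ F (Fin 4 → F) | p.rep ∈ W} = ∑ i ∈ Finset.range n, Fintype.card F ^ i := by
  rw [← Nat.card_eq_fintype_card, ← Projectivization.card_of_finrank F W h]
  have hinj := Projectivization.map_injective W.subtype W.injective_subtype
  rw [← Set.ncard_univ, ← Set.ncard_image_of_injective _ hinj]
  congr 1
  ext p
  simp only [Set.mem_ofPred_eq, Set.image_univ, Set.mem_range]
  constructor
  · intro hp
    refine ⟨Projectivization.mk F ⟨p.rep, hp⟩ (fun h => p.rep_nonzero (congrArg Subtype.val h)), ?_⟩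
    rw [Projectivization.map_mk]
    exact p.mk_rep
  · rintro ⟨x, rfl⟩
    induction x using Projectivization.ind with
    | h v hv =>
      rw [Projectivization.map_mk]
      have hv' : (W.subtype v) ≠ 0 := fun h => hv (Subtype.ext h)
      obtain ⟨a, ha⟩ := Projectivization.exists_smul_eq_mk_rep F (W.subtype v) hv'
      rw [← ha]
      exact W.smul_mem (a : F) v.2

lemma spGraph_adj {F : Type} [Field F] (x y : ℙ F (Fin 4 → F)) :
    (spGraph F).Adj x y ↔ x ≠ y ∧ sympForm x.rep y.rep = 0 := by
  rw [spGraph, SimpleGraph.fromRel_adj, sympForm_swap y.rep, neg_eq_zero, or_self]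

lemma card_perp_one {F : Type} [Field F] [Fintype F] (x : ℙ F (Fin 4 → F)) :
    Set.ncard {p : ℙ F (Fin 4 → F) | sympForm x.rep p.rep = 0}
      = Fintype.card F ^ 2 + Fintype.card F + 1 := by
  have h := card_proj_submodule (n := 3) ((spBil F).orthogonal (F ∙ x.rep)) (by
    rw [LinearMap.BilinForm.finrank_orthogonal (spBil_nondeg F),
      finrank_span_singleton x.rep_nonzero]; simp)
  simp only [Finset.sum_range_succ, Finset.sum_range_zero] at h
  rw [show Fintype.card F ^ 2 + Fintype.card F + 1 = 0 + Fintype.card F ^ 0 + Fintype.card F ^ 1 +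
    Fintype.card F ^ 2 by ring, ← h]
  congr 1
  ext p
  simp only [Set.mem_ofPred_eq, LinearMap.BilinForm.mem_orthogonal_iff]
  constructor
  · intro hp n hn
    obtain ⟨a, rfl⟩ := Submodule.mem_span_singleton.1 hn
    simp [spBil_apply, hp]
  · intro hp
    exact hp _ (Submodule.mem_span_singleton_self _)

lemma card_perp_two {F : Type} [Field F] [Fintype F] (x y : ℙ F (Fin 4 → F)) (hxy : x ≠ y) :
    Set.ncard {p : ℙ F (Fin 4 → F) | sympForm x.rep p.rep = 0 ∧ sympForm y.rep p.rep = 0}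
      = Fintype.card F + 1 := by
  have hli := Projectivization.linearIndependent_pair_iff_ne.2 hxy
  have h := card_proj_submodule (n := 2)
    ((spBil F).orthogonal (Submodule.span F (Set.range ![x.rep, y.rep]))) (by
    rw [LinearMap.BilinForm.finrank_orthogonal (spBil_nondeg F),
      finrank_span_eq_card hli]; simp)
  simp only [Finset.sum_range_succ, Finset.sum_range_zero] at h
  rw [show Fintype.card F + 1 = 0 + Fintype.card F ^ 0 + Fintype.card F ^ 1 by ring, ← h]
  congr 1
  ext p
  simp only [Set.mem_ofPred_eq, LinearMap.BilinForm.mem_orthogonal_iff]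
  constructor
  · rintro ⟨hp, hp'⟩ n hn
    simp only [Matrix.range_cons, Matrix.range_empty, Set.union_empty, Set.singleton_union] at hn
    obtain ⟨a, b, rfl⟩ := Submodule.mem_span_pair.1 hn
    simp [spBil_apply, hp, hp']
  · intro hp
    exact ⟨hp _ (Submodule.subset_span ⟨0, rfl⟩), hp _ (Submodule.subset_span ⟨1, rfl⟩)⟩

/-- `Sp(4,q)` is strongly regular with parameters
`(q³+q²+q+1, q²+q, q−1, q+1)`. -/
theorem spGraph_isSRGWith (F : Type) [Field F] [Fintype F] (q : ℕ)
    (hq : Fintype.card F = q) :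
    (spGraph F).IsSRGWith (q ^ 3 + q ^ 2 + q + 1) (q ^ 2 + q) (q - 1) (q + 1) := by
  subst hq
  refine ⟨?_, ?_, ?_, ?_⟩
  · rw [← Nat.card_eq_fintype_card,
      Projectivization.card_of_finrank F (Fin 4 → F) (n := 4) (by simp)]
    simp only [Finset.sum_range_succ, Finset.sum_range_zero, Nat.card_eq_fintype_card]
    ring
  · intro x
    rw [← SimpleGraph.card_neighborSet_eq_degree, ← Nat.card_eq_fintype_card,
      Nat.card_coe_set_eq]
    have : (spGraph F).neighborSet x = {p | sympForm x.rep p.rep = 0} \ {x} := by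
      ext p
      simp only [SimpleGraph.mem_neighborSet, spGraph_adj, Set.mem_sdiff, Set.mem_ofPred_eq,
        Set.mem_singleton_iff]
      tauto
    have hx : x ∈ {p : ℙ F (Fin 4 → F) | sympForm x.rep p.rep = 0} := sympForm_self x.rep
    rw [this, Set.ncard_sdiff_singleton_of_mem hx, card_perp_one]
    simp
  · intro x y hxy
    rw [spGraph_adj] at hxy
    rw [← Nat.card_eq_fintype_card, Nat.card_coe_set_eq]
    have : (spGraph F).commonNeighbors x y =
        {p | sympForm x.rep p.rep = 0 ∧ sympForm y.rep p.rep = 0} \ {x, y} := by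
      ext p
      simp only [SimpleGraph.mem_commonNeighbors, spGraph_adj, Set.mem_sdiff, Set.mem_ofPred_eq,
        Set.mem_singleton_iff, Set.mem_insert_iff]
      tauto
    rw [this, Set.ncard_sdiff, card_perp_two x y hxy.1, Set.ncard_pair hxy.1]
    · simp
    · rintro p (rfl | rfl)
      · exact ⟨sympForm_self _, by rw [sympForm_swap, hxy.2, neg_zero]⟩
      · exact ⟨hxy.2, sympForm_self _⟩
  · intro x y hne hxy
    rw [spGraph_adj] at hxy
    rw [← Nat.card_eq_fintype_card, Nat.card_coe_set_eq, ← card_perp_two x y hne]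
    congr 1
    ext p
    simp only [SimpleGraph.mem_commonNeighbors, spGraph_adj, Set.mem_ofPred_eq]
    constructor
    · tauto
    · rintro ⟨h1, h2⟩
      refine ⟨⟨?_, h1⟩, ?_, h2⟩
      · rintro rfl
        exact hxy ⟨hne, by rw [sympForm_swap, h2, neg_zero]⟩
      · rintro rfl
        exact hxy ⟨hne, h1⟩
end

section
/- Let F be a finite field with |F| = q. For every vertex v of the symplectic graph Sp(4,q), the subgraph induced on the neighbourhood N(v) is a disjoint union of cliques: the relation 'equal or adjacent' restricted to N(v) is an equivalence relation, and each of its equivalence classes has exactly q elements (so there are exactly q+1 classes). -/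
open scoped Classical LinearAlgebra.Projectivization

open Module in
lemma ncard_points {F : Type} [Field F] [Fintype F] (W : Submodule F (Fin 4 → F)) (n : ℕ)
    (h : finrank F W = n) :
    {x : ℙ F (Fin 4 → F) | x.rep ∈ W}.ncard = ∑ i ∈ Finset.range n, Fintype.card F ^ i := by
  have h1 := Projectivization.card_of_finrank F W h
  rw [Nat.card_eq_fintype_card (α := F)] at h1
  rw [← h1, ← Set.ncard_univ, ← Set.ncard_image_of_injective _
    (Projectivization.map_injective W.subtype W.injective_subtype), Set.image_univ]
  congr 1
  ext x
  constructor
  · intro hx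
    refine ⟨Projectivization.mk F ⟨x.rep, hx⟩ ?_, ?_⟩
    · intro h0
      exact x.rep_nonzero (congrArg Subtype.val h0)
    · rw [Projectivization.map_mk]
      exact x.mk_rep
  · rintro ⟨y, rfl⟩
    induction y using Projectivization.ind with
    | h w hw =>
      rw [Projectivization.map_mk]
      have hw' : W.subtype w ≠ 0 := by simpa using hw
      obtain ⟨a, ha⟩ := Projectivization.exists_smul_eq_mk_rep F (W.subtype w) hw'
      show (Projectivization.mk F (W.subtype w) hw').rep ∈ W
      rw [← ha]
      exact W.smul_mem (a : F) w.2

/-- The symplectic form as a bilinear form. -/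
noncomputable def sympB (F : Type) [Field F] : LinearMap.BilinForm F (Fin 4 → F) :=
  LinearMap.mk₂ F sympForm
    (by intros; simp [sympForm]; ring) (by intros; simp [sympForm]; ring)
    (by intros; simp [sympForm]; ring) (by intros; simp [sympForm]; ring)

lemma sympB_apply {F : Type} [Field F] (u w : Fin 4 → F) : sympB F u w = sympForm u w := rfl

lemma sympForm_comm {F : Type} [Field F] (u w : Fin 4 → F) :
    sympForm u w = 0 ↔ sympForm w u = 0 := by
  rw [sympForm_swap, neg_eq_zero]

lemma sympB_nondeg (F : Type) [Field F] : (sympB F).Nondegenerate := by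
  have key : ∀ x : Fin 4 → F, (∀ y, sympForm x y = 0) → x = 0 := by
    intro x h
    have h0 := h (Pi.single 0 1)
    have h1 := h (Pi.single 1 1)
    have h2 := h (Pi.single 2 1)
    have h3 := h (Pi.single 3 1)
    simp [sympForm] at h0 h1 h2 h3
    ext i
    fin_cases i <;> simp [h0, h1, h2, h3]
  exact ⟨fun x h => key x h, fun x h => key x fun y => (sympForm_comm _ _).1 (h y)⟩

open Module in
lemma ncard_perp_one {F : Type} [Field F] [Fintype F] (v : ℙ F (Fin 4 → F)) :
    {x : ℙ F (Fin 4 → F) | sympForm v.rep x.rep = 0}.ncard =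
      1 + Fintype.card F + Fintype.card F ^ 2 := by
  have h := LinearMap.BilinForm.finrank_orthogonal (sympB_nondeg F) (Submodule.span F {v.rep})
  rw [finrank_span_singleton v.rep_nonzero] at h
  have := ncard_points _ 3 (by simpa using h)
  simp only [Finset.sum_range_succ, Finset.sum_range_zero] at this
  rw [pow_zero, pow_one, zero_add] at this
  rw [← this]
  congr 1
  ext x
  simp only [Set.mem_ofPred_eq, LinearMap.BilinForm.mem_orthogonal_iff]
  constructor
  · intro hx n hn
    obtain ⟨c, rfl⟩ := Submodule.mem_span_singleton.1 hn
    simp [sympB_apply, hx]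
  · intro hx
    exact hx _ (Submodule.mem_span_singleton_self _)

open Module in
lemma perp_two {F : Type} [Field F] (v u : ℙ F (Fin 4 → F)) (hne : v ≠ u)
    (hvu : sympForm v.rep u.rep = 0) :
    finrank F (Submodule.span F {v.rep, u.rep}) = 2 ∧
    ∀ x, x ∈ Submodule.span F {v.rep, u.rep} ↔ sympForm v.rep x = 0 ∧ sympForm u.rep x = 0 := by
  have hli : LinearIndependent F ![v.rep, u.rep] :=
    (Projectivization.linearIndependent_pair_iff_ne).2 hne
  have hf : finrank F (Submodule.span F {v.rep, u.rep}) = 2 := by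
    have := finrank_span_eq_card hli
    have hr : Set.range ![v.rep, u.rep] = {v.rep, u.rep} := by
      ext y
      simp [or_comm]
    rw [hr] at this
    simpa using this
  have hperp : ∀ x, x ∈ (sympB F).orthogonal (Submodule.span F {v.rep, u.rep}) ↔
      sympForm v.rep x = 0 ∧ sympForm u.rep x = 0 := by
    intro x
    rw [LinearMap.BilinForm.mem_orthogonal_iff]
    constructor
    · intro h
      exact ⟨h _ (Submodule.subset_span (by simp)), h _ (Submodule.subset_span (by simp))⟩
    · rintro ⟨h1, h2⟩ n hn
      obtain ⟨a, b, rfl⟩ := Submodule.mem_span_pair.1 hn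
      simp [sympB_apply, h1, h2]
  refine ⟨hf, fun x => ?_⟩
  rw [← hperp]
  have h := LinearMap.BilinForm.finrank_orthogonal (sympB_nondeg F)
    (Submodule.span F {v.rep, u.rep})
  have hle : Submodule.span F {v.rep, u.rep} ≤
      (sympB F).orthogonal (Submodule.span F {v.rep, u.rep}) := by
    rw [Submodule.span_le]
    rintro y (rfl | rfl)
    · exact (hperp _).2 ⟨sympForm_self _, (sympForm_comm _ _).1 hvu⟩
    · exact (hperp _).2 ⟨hvu, sympForm_self _⟩
  rw [← Submodule.eq_of_le_of_finrank_eq hle (by rw [h, hf]; simp)]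

lemma ncard_perp_two {F : Type} [Field F] [Fintype F] (v u : ℙ F (Fin 4 → F)) (hne : v ≠ u)
    (hvu : sympForm v.rep u.rep = 0) :
    {x : ℙ F (Fin 4 → F) | sympForm v.rep x.rep = 0 ∧ sympForm u.rep x.rep = 0}.ncard =
      1 + Fintype.card F := by
  obtain ⟨h1, h2⟩ := perp_two v u hne hvu
  have := ncard_points _ 2 h1
  simpa [Finset.sum_range_succ, h2] using this

/-- for every vertex `v` of `Sp(4,q)`, the subgraph induced on the
neighbourhood `N(v)` is a disjoint union of cliques: the relation "equal or adjacent"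
restricted to `N(v)` is an equivalence relation, each of its classes has exactly `q`
elements, and there are exactly `q + 1` classes. -/
theorem spGraph_firstSubconstituent_unionOfCliques (F : Type) [Field F] [Fintype F] (q : ℕ)
    (hq : Fintype.card F = q) (v : ℙ F (Fin 4 → F)) :
    Equivalence (fun x y : (spGraph F).neighborSet v => x = y ∨ (spGraph F).Adj ↑x ↑y) ∧
    (∀ u : (spGraph F).neighborSet v,
      {w : (spGraph F).neighborSet v | w = u ∨ (spGraph F).Adj ↑w ↑u}.ncard = q) ∧
    {S : Set ((spGraph F).neighborSet v) |
      ∃ u : (spGraph F).neighborSet v,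
        S = {w | w = u ∨ (spGraph F).Adj ↑w ↑u}}.ncard = q + 1 := by

  have hrel : ∀ x y : (spGraph F).neighborSet v,
      (x = y ∨ (spGraph F).Adj ↑x ↑y) ↔ sympForm x.1.rep y.1.rep = 0 := by
    intro x y
    rw [spGraph_adj]
    constructor
    · rintro (rfl | h)
      · exact sympForm_self _
      · exact h.2
    · intro h
      by_cases hxy : x = y
      · exact Or.inl hxy
      · exact Or.inr ⟨fun e => hxy (Subtype.ext e), h⟩
  have hN : ∀ x : (spGraph F).neighborSet v, v ≠ x.1 ∧ sympForm v.rep x.1.rep = 0 :=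
    fun x => (spGraph_adj _ _).1 x.2
  have hE : Equivalence
      (fun x y : (spGraph F).neighborSet v => x = y ∨ (spGraph F).Adj ↑x ↑y) := by
    refine ⟨fun x => Or.inl rfl, ?_, ?_⟩
    · intro x y h
      rw [hrel] at h ⊢
      exact (sympForm_comm _ _).1 h
    · intro x y z hxy hyz
      rw [hrel] at hxy hyz ⊢
      have hz := ((perp_two v y.1 (hN y).1 (hN y).2).2 z.1.rep).2 ⟨(hN z).2, hyz⟩
      obtain ⟨a, b, hab⟩ := Submodule.mem_span_pair.1 hz
      rw [← hab, ← sympB_apply, map_add, map_smul, map_smul, sympB_apply, sympB_apply, hxy,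
        (sympForm_comm _ _).1 (hN x).2]
      simp
  have hC : ∀ u : (spGraph F).neighborSet v,
      {w : (spGraph F).neighborSet v | w = u ∨ (spGraph F).Adj ↑w ↑u}.ncard = q := by
    intro u
    have h2 := ncard_perp_two v u.1 (hN u).1 (hN u).2
    rw [← Set.ncard_image_of_injective _ Subtype.val_injective]
    have hs : Subtype.val '' {w : (spGraph F).neighborSet v | w = u ∨ (spGraph F).Adj ↑w ↑u} =
        {x : ℙ F (Fin 4 → F) | sympForm v.rep x.rep = 0 ∧ sympForm u.1.rep x.rep = 0} \ {v} := by
      ext x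
      constructor
      · rintro ⟨w, hw, rfl⟩
        exact ⟨⟨(hN w).2, (sympForm_comm _ _).1 ((hrel _ _).1 hw)⟩, fun e => (hN w).1 e.symm⟩
      · rintro ⟨⟨h1, h2⟩, h3⟩
        exact ⟨⟨x, (spGraph_adj _ _).2 ⟨fun e => h3 e.symm, h1⟩⟩,
          (hrel _ _).2 ((sympForm_comm _ _).1 h2), rfl⟩
    rw [hs, Set.ncard_sdiff_singleton_of_mem, h2, hq]
    · omega
    · exact ⟨sympForm_self _, (sympForm_comm _ _).1 (hN u).2⟩
  refine ⟨hE, hC, ?_⟩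
  have hcard : Fintype.card ((spGraph F).neighborSet v) = q * (q + 1) := by
    rw [← Nat.card_eq_fintype_card, Nat.card_coe_set_eq]
    have h1 := ncard_perp_one v
    have hs : (spGraph F).neighborSet v =
        {x : ℙ F (Fin 4 → F) | sympForm v.rep x.rep = 0} \ {v} := by
      ext x
      rw [SimpleGraph.mem_neighborSet, spGraph_adj]
      exact ⟨fun h => ⟨h.2, fun e => h.1 e.symm⟩, fun h => ⟨fun e => h.2 e.symm, h.1⟩⟩
    have hv : v ∈ {x : ℙ F (Fin 4 → F) | sympForm v.rep x.rep = 0} := sympForm_self _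
    rw [hs, Set.ncard_sdiff_singleton_of_mem hv, h1, hq]
    have : 1 + q + q ^ 2 = q * (q + 1) + 1 := by ring
    omega
  have hqpos : 0 < q := hq ▸ Fintype.card_pos
  let f : (spGraph F).neighborSet v → Set ((spGraph F).neighborSet v) :=
    fun u => {w | w = u ∨ (spGraph F).Adj ↑w ↑u}
  have hset : {S : Set ((spGraph F).neighborSet v) |
      ∃ u : (spGraph F).neighborSet v, S = {w | w = u ∨ (spGraph F).Adj ↑w ↑u}} =
      ((Finset.univ.image f : Finset _) : Set (Set ((spGraph F).neighborSet v))) := by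
    ext S
    simp [f, eq_comm]
  rw [hset, Set.ncard_coe_finset]
  have hsum := Finset.card_eq_sum_card_image f Finset.univ
  rw [Finset.sum_const_nat (m := q), Finset.card_univ, hcard] at hsum
  · exact (Nat.eq_of_mul_eq_mul_right hqpos (by rw [← hsum, mul_comm]))
  · intro S hS
    obtain ⟨u, -, rfl⟩ := Finset.mem_image.1 hS
    rw [← hC u, ← Set.ncard_coe_finset]
    congr 1
    ext w
    simp only [Finset.coe_filter, Finset.mem_univ, true_and, Set.mem_ofPred_eq]
    constructor
    · intro h
      have : w ∈ f w := Or.inl rfl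
      rw [h] at this
      exact this
    · intro h
      ext z
      exact ⟨fun hz => hE.trans hz h, fun hz => hE.trans hz (hE.symm h)⟩
end

section
/- Let s ≥ t ≥ 2, let Γ be a strongly regular graph with parameters ((s+1)(st+1), s(t+1), s−1, t+1), and let v be a vertex of Γ. Let C be the subgraph induced on the neighbourhood N(v) and let B be the subgraph induced on the vertices distinct from v and not adjacent to v. Let m₂ and m₄ be natural numbers with m₂·(s+t) = s²·(t²−1) and m₄·(s+t) = t·(s−1)·(s²−t). Then C is a disjoint union of t+1 cliques of size s if and only if the characteristic polynomial over ℚ of the adjacency matrix of B equals (X − (t+1)(s−1)) · (X − (s−1))^{m₂} · (X − (s−t−1))^{(t+1)(s−1)} · (X + (t+1))^{m₄}. -/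
open scoped Classical
open Polynomial

namespace FS
open Matrix

lemma spec {n : Type*} [Fintype n] [DecidableEq n] (B : Matrix n n ℝ) (hB : Bᵀ = B) :
    ∃ l : n → ℝ, B.charpoly = ∏ i, (X - C (l i)) ∧
      (∀ q : ℝ[X], (aeval B q).trace = ∑ i, q.eval (l i)) ∧
      (∀ q : ℝ[X], aeval B q = 0 → ∀ i, q.eval (l i) = 0) := by
  have hA : B.IsHermitian := by
    rw [Matrix.IsHermitian, Matrix.conjTranspose_eq_transpose_of_trivial, hB]
  have key : ∀ q : ℝ[X], aeval B q =
      Unitary.conjStarAlgAut ℝ _ hA.eigenvectorUnitary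
        (diagonal (fun i => q.eval (hA.eigenvalues i))) := by
    intro q
    have h1 : (diagonal (fun i => q.eval (hA.eigenvalues i)) : Matrix n n ℝ)
        = aeval (diagonal hA.eigenvalues : Matrix n n ℝ) q := by
      have := (Polynomial.aeval_algHom_apply (Matrix.diagonalAlgHom (n := n) (α := ℝ) ℝ)
        hA.eigenvalues q)
      simp only [Matrix.diagonalAlgHom_apply] at this
      rw [this]
      congr 1
      funext i
      have := (Polynomial.aeval_algHom_apply (Pi.evalAlgHom ℝ (fun _ : n => ℝ) i)
        hA.eigenvalues q)
      simpa using this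
    rw [h1]
    have h2 := Polynomial.aeval_algHom_apply
      (Unitary.conjStarAlgAut ℝ (Matrix n n ℝ) hA.eigenvectorUnitary).toAlgEquiv.toAlgHom
      (diagonal hA.eigenvalues : Matrix n n ℝ) q
    have h3 := hA.spectral_theorem
    have h4 : (RCLike.ofReal ∘ hA.eigenvalues : n → ℝ) = hA.eigenvalues := by
      funext i; simp
    rw [h4] at h3
    conv_lhs => rw [h3]
    exact h2
  refine ⟨hA.eigenvalues, by simpa using hA.charpoly_eq, ?_, ?_⟩
  · intro q
    rw [key q, Unitary.conjStarAlgAut_apply, Matrix.trace_mul_comm, ← mul_assoc]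
    simp [Matrix.trace]
  · intro q hq i
    rw [key q] at hq
    have := (map_eq_zero_iff _ (EquivLike.injective
      (Unitary.conjStarAlgAut ℝ (Matrix n n ℝ) hA.eigenvectorUnitary))).1 hq
    have h2 := congrFun (congrFun this i) i
    simpa using h2

lemma eq_zero_of_trace {m n : Type*} [Fintype m] [Fintype n] (Z : Matrix m n ℝ)
    (h : (Zᵀ * Z).trace = 0) : Z = 0 := by
  rw [← Matrix.conjTranspose_eq_transpose_of_trivial] at h
  exact Matrix.trace_conjTranspose_mul_self_eq_zero_iff.1 h

/-- all ones -/
def J (m n : Type*) : Matrix m n ℝ := Matrix.of fun _ _ => 1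

lemma J_mul_J (l m n : Type*) [Fintype m] : J l m * J m n = (Fintype.card m : ℝ) • J l n := by
  ext i j; simp [J, Matrix.mul_apply]

lemma J_tr (m n : Type*) : (J m n)ᵀ = J n m := rfl

lemma trace_J (n : Type*) [Fintype n] : (J n n).trace = Fintype.card n := by
  simp [J, Matrix.trace]

structure Dat (P Q : Type*) [Fintype P] [Fintype Q] [DecidableEq P] [DecidableEq Q]
    (s t : ℝ) (c : Matrix P P ℝ) (N : Matrix P Q ℝ) (B : Matrix Q Q ℝ) : Prop where
  cT : cᵀ = c
  BT : Bᵀ = B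
  h1 : c * c + N * Nᵀ = (s-t-2) • c + ((s-1)*(t+1)) • (1 : Matrix P P ℝ) + t • J P P
  h2 : c * N + N * B = (s-t-2) • N + (t+1) • J P Q
  h3 : Nᵀ * N + B * B = (s-t-2) • B + ((s-1)*(t+1)) • (1 : Matrix Q Q ℝ) + (t+1) • J Q Q
  cJ : c * J P P = (s-1) • J P P
  NJ : N * J Q P = (s*t) • J P P
  NTJ : Nᵀ * J P Q = (t+1) • J Q Q
  BJ : B * J Q Q = ((t+1)*(s-1)) • J Q Q
  cardP : (Fintype.card P : ℝ) = s*(t+1)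
  cardQ : (Fintype.card Q : ℝ) = s^2*t
  trc : c.trace = 0
  trcc : (c * c).trace = s*(t+1)*(s-1)
  trB : B.trace = 0
  trBB : (B * B).trace = s^2*t*((t+1)*(s-1))

section
variable {P Q : Type*} [Fintype P] [Fintype Q] [DecidableEq P] [DecidableEq Q]
    {s t : ℝ} {c : Matrix P P ℝ} {N : Matrix P Q ℝ} {B : Matrix Q Q ℝ}

lemma tr_eq {l m n : Type*} [Fintype m] {a : Matrix l m ℝ} {b : Matrix m n ℝ}
    {d : Matrix l n ℝ} (h : a * b = d) : bᵀ * aᵀ = dᵀ := by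
  rw [← h, Matrix.transpose_mul]

lemma Dat.Jc (h : Dat P Q s t c N B) : J P P * c = (s-1) • J P P := by
  simpa [h.cT, J_tr] using tr_eq h.cJ
lemma Dat.JNT (h : Dat P Q s t c N B) : J P Q * Nᵀ = (s*t) • J P P := by
  simpa [J_tr] using tr_eq h.NJ
lemma Dat.JN (h : Dat P Q s t c N B) : J Q P * N = (t+1) • J Q Q := by
  simpa [J_tr] using tr_eq h.NTJ
lemma Dat.JB (h : Dat P Q s t c N B) : J Q Q * B = ((t+1)*(s-1)) • J Q Q := by
  simpa [h.BT, J_tr] using tr_eq h.BJ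

/-- cubic relation for B -/
def Cub (Q : Type*) [Fintype Q] [DecidableEq Q] (s t : ℝ) (B : Matrix Q Q ℝ) : Prop :=
  (B - (s-1) • (1 : Matrix Q Q ℝ)) * (B + (t+1) • (1 : Matrix Q Q ℝ)) *
    (B - (s-t-1) • (1 : Matrix Q Q ℝ)) = (t*(t+1)*(s-1)) • J Q Q

lemma Dat.BB (h : Dat P Q s t c N B) :
    (B - (s-1) • (1 : Matrix Q Q ℝ)) * (B + (t+1) • (1 : Matrix Q Q ℝ)) =
      (t+1) • J Q Q - Nᵀ * N := by
  have := h.h3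
  simp only [Matrix.sub_mul, Matrix.mul_add, Matrix.smul_mul, Matrix.mul_smul, Matrix.one_mul, Matrix.mul_one]
  linear_combination (norm := module) this

lemma Dat.cub_of (h : Dat P Q s t c N B)
    (hc : c * c = (s-2) • c + (s-1) • (1 : Matrix P P ℝ)) : Cub Q s t B := by
  have hNN : N * Nᵀ = ((s-1)*t) • (1 : Matrix P P ℝ) + t • J P P - t • c := by
    have := h.h1
    linear_combination (norm := module) this - hc
  have hcNN : c * (N * Nᵀ) = ((s-1)*t) • c + (t*(s-1)) • J P P - t • (c*c) := by
    rw [hNN]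
    simp only [Matrix.mul_sub, Matrix.mul_add, Matrix.mul_smul, Matrix.mul_one, h.cJ]
    module
  have hE : c * N + N = J P Q := by
    rw [← sub_eq_zero]
    apply eq_zero_of_trace
    rw [Matrix.trace_mul_comm]
    have : (c * N + N - J P Q) * (c * N + N - J P Q)ᵀ = 0 := by
      have e1 : (c * N + N) * Nᵀ = (t*s) • J P P := by
        rw [Matrix.add_mul, Matrix.mul_assoc, hcNN, hNN, hc]
        module
      have e2 : (c * N + N) * J Q P = (s^2*t) • J P P := by
        rw [Matrix.add_mul, Matrix.mul_assoc, h.NJ, Matrix.mul_smul, h.cJ]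
        module
      have e3 : J P Q * (Nᵀ * c) = (s*t*(s-1)) • J P P := by
        rw [← Matrix.mul_assoc, h.JNT, Matrix.smul_mul, h.Jc]
        module
      have e4 : (c * N + N) * (Nᵀ * c) = (t*s*(s-1)) • J P P := by
        rw [← Matrix.mul_assoc, e1, Matrix.smul_mul, h.Jc]
        module
      rw [Matrix.transpose_sub, Matrix.transpose_add, Matrix.transpose_mul, h.cT, J_tr,
        Matrix.sub_mul, Matrix.mul_sub, Matrix.mul_sub, Matrix.mul_add, Matrix.mul_add, e1, e2, e3, e4, h.JNT, J_mul_J, h.cardQ]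
      module
    rw [this, Matrix.trace_zero]
  have hNB : N * B = (s-t-1) • N + t • J P Q := by
    linear_combination (norm := module) h.h2 - hE
  rw [Cub, h.BB, Matrix.sub_mul, Matrix.mul_sub, Matrix.mul_sub, Matrix.mul_assoc, hNB]
  simp only [Matrix.mul_add, Matrix.smul_mul, Matrix.mul_smul, Matrix.mul_one, h.JB, h.NTJ]
  module

lemma Dat.of_cub (h : Dat P Q s t c N B) (hB : Cub Q s t B) :
    c * c = (s-2) • c + (s-1) • (1 : Matrix P P ℝ) := by
  rw [Cub, h.BB, Matrix.sub_mul, Matrix.mul_sub, Matrix.mul_sub, Matrix.mul_assoc] at hB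
  simp only [Matrix.mul_add, Matrix.smul_mul, Matrix.mul_smul, Matrix.mul_one, h.JB, h.NTJ] at hB
  have hZ : N * B - (s-t-1) • N - t • J P Q = 0 := by
    apply eq_zero_of_trace
    have e0 : Nᵀ * (N * B - (s-t-1) • N - t • J P Q) = 0 := by
      rw [Matrix.mul_sub, Matrix.mul_sub, Matrix.mul_smul, Matrix.mul_smul, h.NTJ]
      linear_combination (norm := module) - hB
    have e1 : J Q P * (N * B - (s-t-1) • N - t • J P Q) = 0 := by
      rw [Matrix.mul_sub, Matrix.mul_sub, Matrix.mul_smul, Matrix.mul_smul, ← Matrix.mul_assoc, h.JN,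
        Matrix.smul_mul, h.JB, J_mul_J, h.cardP]
      module
    have : (N * B - (s-t-1) • N - t • J P Q)ᵀ * (N * B - (s-t-1) • N - t • J P Q) = 0 := by
      rw [Matrix.transpose_sub, Matrix.transpose_sub, Matrix.transpose_mul, h.BT,
        Matrix.transpose_smul, Matrix.transpose_smul, J_tr, Matrix.sub_mul, Matrix.sub_mul, Matrix.mul_assoc,
        Matrix.smul_mul, Matrix.smul_mul, e0, e1]
      simp
    rw [this, Matrix.trace_zero]
  have hE : c * N = J P Q - N := by
    linear_combination (norm := module) h.h2 - hZ
  have hcc : N * Nᵀ = (s-t-2) • c + ((s-1)*(t+1)) • (1 : Matrix P P ℝ) + t • J P P - c * c := by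
    linear_combination (norm := module) h.h1
  have e5 : c * (N * Nᵀ) = (s * t) • J P P - N * Nᵀ := by
    rw [← Matrix.mul_assoc, hE, Matrix.sub_mul, h.JNT]
  rw [hcc] at e5
  simp only [Matrix.mul_sub, Matrix.mul_add, Matrix.mul_smul, Matrix.mul_one, h.cJ] at e5
  set W := c * c - (s-2) • c - (s-1) • (1 : Matrix P P ℝ) with hW
  have hcW : c * W = -(t+1) • W := by
    rw [hW]
    simp only [Matrix.mul_sub, Matrix.mul_smul, Matrix.mul_one]
    linear_combination (norm := module) - e5
  have hccW : (c * c) * W = ((t+1)^2) • W := by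
    rw [Matrix.mul_assoc, hcW, Matrix.mul_smul, hcW]; module
  have hWW : W * W = ((t+1)^2 + (s-2)*(t+1) - (s-1)) • W := by
    nth_rewrite 1 [hW]
    rw [Matrix.sub_mul, Matrix.sub_mul, hccW, Matrix.smul_mul, Matrix.smul_mul, hcW, Matrix.one_mul]
    module
  have hWT : Wᵀ = W := by
    rw [hW]; simp [Matrix.transpose_mul, h.cT]
  have htr : W.trace = 0 := by
    rw [hW]; simp [Matrix.trace_sub, Matrix.trace_smul, h.trc, h.trcc, h.cardP]; ring
  have : W = 0 := by
    apply eq_zero_of_trace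
    rw [hWT, hWW, Matrix.trace_smul, htr, smul_zero]
  rw [hW] at this
  linear_combination (norm := module) this
end
end FS
namespace FS
open Matrix

lemma four (a b c d : ℝ) (M : Multiset ℝ) (h : ∀ x ∈ M, x = a ∨ x = b ∨ x = c ∨ x = d) :
    ∃ ma mb mc md : ℕ, M = ma • {a} + mb • {b} + mc • {c} + md • {d} := by
  induction M using Multiset.induction_on with
  | empty => exact ⟨0, 0, 0, 0, by simp⟩
  | cons x M ih =>
    obtain ⟨ma, mb, mc, md, e⟩ := ih (fun y hy => h y (Multiset.mem_cons_of_mem hy))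
    rw [← Multiset.singleton_add]
    rcases h x (Multiset.mem_cons_self x M) with rfl | rfl | rfl | rfl
    · exact ⟨ma+1, mb, mc, md, by rw [e, succ_nsmul]; abel⟩
    · exact ⟨ma, mb+1, mc, md, by rw [e, succ_nsmul]; abel⟩
    · exact ⟨ma, mb, mc+1, md, by rw [e, succ_nsmul]; abel⟩
    · exact ⟨ma, mb, mc, md+1, by rw [e, succ_nsmul]; abel⟩

section
variable {P Q : Type*} [Fintype P] [Fintype Q] [DecidableEq P] [DecidableEq Q]
    {s t : ℝ} {c : Matrix P P ℝ} {N : Matrix P Q ℝ} {B : Matrix Q Q ℝ}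

/-- the cubic polynomial -/
noncomputable def cubP (s t : ℝ) : ℝ[X] :=
  (X - C (s-1)) * (X + C (t+1)) * (X - C (s-t-1))

lemma aeval_cubP : aeval B (cubP s t) =
    (B - (s-1) • (1 : Matrix Q Q ℝ)) * (B + (t+1) • (1 : Matrix Q Q ℝ)) *
    (B - (s-t-1) • (1 : Matrix Q Q ℝ)) := by
  simp only [cubP, map_mul, map_sub, map_add, aeval_X, aeval_C, Algebra.algebraMap_eq_smul_one,
    sub_smul, add_smul]

lemma eval_cubP (x : ℝ) : (cubP s t).eval x = (x - (s-1)) * (x + (t+1)) * (x - (s-t-1)) := by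
  simp [cubP]

lemma Dat.charpoly_of (h : Dat P Q s t c N B) (hs : 1 < s) (ht : 0 < t) (m2 m4 k : ℕ)
    (hm2 : (m2 : ℝ) * (s + t) = s ^ 2 * (t ^ 2 - 1))
    (hm4 : (m4 : ℝ) * (s + t) = t * (s - 1) * (s ^ 2 - t))
    (hk : (k : ℝ) = (t+1)*(s-1)) (hB : Cub Q s t B) :
    B.charpoly = (X - C ((t+1)*(s-1))) * (X - C (s-1)) ^ m2 * (X - C (s-t-1)) ^ k
      * (X + C (t+1)) ^ m4 := by
  obtain ⟨l, hl, htr, hz⟩ := spec B h.BT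
  rw [Cub, ← aeval_cubP] at hB
  have hroot : ∀ i, l i = (t+1)*(s-1) ∨ l i = s-1 ∨ l i = s-t-1 ∨ l i = -(t+1) := by
    intro i
    have := hz (cubP s t * (X - C ((t+1)*(s-1)))) (by
      rw [map_mul, hB]
      simp only [map_sub, aeval_X, aeval_C, Algebra.algebraMap_eq_smul_one, Matrix.mul_sub,
        Matrix.smul_mul, Matrix.mul_smul, Matrix.mul_one, h.JB]
      module) i
    rw [eval_mul, eval_cubP, eval_sub, eval_X, eval_C, mul_eq_zero, mul_eq_zero, mul_eq_zero] at this
    rcases this with ((h1 | h1) | h1) | h1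
    · right; left; linarith
    · right; right; right; linarith
    · right; right; left; linarith
    · left; linarith
  obtain ⟨ma, mb, mc, md, e⟩ := four ((t+1)*(s-1)) (s-1) (s-t-1) (-(t+1))
    (Finset.univ.val.map l) (by
      intro x hx
      obtain ⟨i, -, rfl⟩ := Multiset.mem_map.1 hx
      exact hroot i)
  have hsum : ∀ f : ℝ → ℝ, ∑ i, f (l i) = ma * f ((t+1)*(s-1)) + mb * f (s-1) + mc * f (s-t-1)
      + md * f (-(t+1)) := by
    intro f
    have := congrArg (fun M : Multiset ℝ => (M.map f).sum) e
    simp only [Multiset.map_map, Multiset.map_add, Multiset.sum_add, Multiset.map_nsmul,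
      Multiset.sum_nsmul, Multiset.map_singleton, Multiset.sum_singleton, nsmul_eq_mul] at this
    exact this
  have hprod : B.charpoly = (X - C ((t+1)*(s-1))) ^ ma * (X - C (s-1)) ^ mb
      * (X - C (s-t-1)) ^ mc * (X - C (-(t+1))) ^ md := by
    have := congrArg (fun M : Multiset ℝ => (M.map (fun x => (X - C x : ℝ[X]))).prod) e
    simp only [Multiset.map_map, Multiset.map_add, Multiset.prod_add, Multiset.map_nsmul,
      Multiset.prod_nsmul, Multiset.map_singleton, Multiset.prod_singleton] at this
    rw [hl]
    exact this
  have E0 := htr 1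
  have E1 := htr X
  have E2 := htr (X^2)
  have E3 := htr (cubP s t)
  simp only [eval_cubP] at E3
  rw [hB, trace_smul, trace_J, h.cardQ, hsum (fun x => (x - (s-1)) * (x + (t+1)) * (x - (s-t-1)))] at E3
  simp only [map_one, trace_one, h.cardQ, eval_one] at E0
  rw [hsum (fun _ => 1)] at E0
  simp only [aeval_X, h.trB, eval_X] at E1
  rw [hsum (fun x => x)] at E1
  simp only [map_pow, aeval_X, pow_two B, h.trBB, eval_X, eval_pow] at E2
  rw [hsum (fun x => x^2)] at E2
  simp only [smul_eq_mul] at E3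
  have s0 : s ≠ 0 := by positivity
  have t0 : t ≠ 0 := ht.ne'
  have st0 : s + t ≠ 0 := by positivity
  have s1 : s - 1 ≠ 0 := by linarith
  have t1 : t + 1 ≠ 0 := by positivity
  have Ha : (ma : ℝ) = 1 := by
    apply mul_left_cancel₀ (mul_ne_zero (mul_ne_zero (pow_ne_zero 2 t0) (pow_ne_zero 2 s0))
      (mul_ne_zero t1 s1))
    linear_combination - E3
  rw [Ha] at E0 E1 E2
  have Hb : (mb : ℝ) = m2 := by
    apply mul_left_cancel₀ (mul_ne_zero t0 st0)
    linear_combination -E2 + ((s-t-1) - (t+1)) * E1 + (s-t-1)*(t+1) * E0 - t * hm2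
  have Hd : (md : ℝ) = m4 := by
    apply mul_left_cancel₀ (mul_ne_zero s0 st0)
    linear_combination -E2 + ((s-t-1) + (s-1)) * E1 - (s-t-1)*(s-1) * E0 - s * hm4
  have Hc : (mc : ℝ) = k := by
    apply mul_left_cancel₀ (mul_ne_zero t0 s0)
    linear_combination E2 - ((s-1)-(t+1)) * E1 - (s-1)*(t+1) * E0 - t*s * hk
  norm_cast at Ha Hb Hc Hd
  rw [hprod, Ha, Hb, Hc, Hd, pow_one, C_neg, sub_neg_eq_add]

lemma Dat.of_charpoly (h : Dat P Q s t c N B) (hs : 1 < s) (ht : 0 < t) (m2 m4 k : ℕ)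
    (hB : B.charpoly = (X - C ((t+1)*(s-1))) * (X - C (s-1)) ^ m2 * (X - C (s-t-1)) ^ k
      * (X + C (t+1)) ^ m4) : Cub Q s t B := by
  obtain ⟨l, hl, htr, hz⟩ := spec B h.BT
  have e : Finset.univ.val.map l = {(t+1)*(s-1)} + m2 • {s-1} + k • {s-t-1} + m4 • {-(t+1)} := by
    have h1 : B.charpoly.roots = Finset.univ.val.map l := by
      rw [hl, Polynomial.roots_prod]
      · simp
      · simp [Finset.prod_ne_zero_iff, Polynomial.X_sub_C_ne_zero]
    have h0 : B.charpoly ≠ 0 := (Matrix.charpoly_monic B).ne_zero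
    rw [← h1, hB]
    rw [hB] at h0
    have hX : (X + C (t+1) : ℝ[X]) = X - C (-(t+1)) := by rw [C_neg, sub_neg_eq_add]
    rw [roots_mul h0, roots_mul (left_ne_zero_of_mul h0),
      roots_mul (left_ne_zero_of_mul (left_ne_zero_of_mul h0)), hX]
    simp only [roots_pow, roots_X_sub_C]
  have hsum : ∀ f : ℝ → ℝ, ∑ i, f (l i) = f ((t+1)*(s-1)) + m2 * f (s-1) + k * f (s-t-1)
      + m4 * f (-(t+1)) := by
    intro f
    have := congrArg (fun M : Multiset ℝ => (M.map f).sum) e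
    simp only [Multiset.map_map, Multiset.map_add, Multiset.sum_add, Multiset.map_nsmul,
      Multiset.sum_nsmul, Multiset.map_singleton, Multiset.sum_singleton, nsmul_eq_mul] at this
    exact this
  have E1 := htr (cubP s t)
  have E2 := htr (cubP s t * cubP s t)
  simp only [eval_mul, eval_cubP] at E1 E2
  rw [hsum (fun x => (x - (s-1)) * (x + (t+1)) * (x - (s-t-1)))] at E1
  rw [hsum (fun x => (x - (s-1)) * (x + (t+1)) * (x - (s-t-1)) *
    ((x - (s-1)) * (x + (t+1)) * (x - (s-t-1))))] at E2
  rw [map_mul] at E2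
  set K := aeval B (cubP s t) with hK
  have hKT : Kᵀ = K := by
    have h2 : Kᵀ = (B - (s-t-1) • (1 : Matrix Q Q ℝ)) * ((B + (t+1) • (1 : Matrix Q Q ℝ)) *
       (B - (s-1) • (1 : Matrix Q Q ℝ))) := by
      rw [hK, aeval_cubP]
      simp [Matrix.transpose_mul, h.BT]
    rw [h2, hK, aeval_cubP]
    simp only [Matrix.mul_assoc, Matrix.sub_mul, Matrix.add_mul, Matrix.smul_mul, Matrix.one_mul,
      Matrix.mul_one, Matrix.mul_sub, Matrix.mul_add, Matrix.mul_smul]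
    module
  have hKJ : K * J Q Q = (t^2*s^2*(t+1)*(s-1)) • J Q Q := by
    rw [hK, aeval_cubP]
    simp only [Matrix.mul_assoc, Matrix.sub_mul, Matrix.add_mul, Matrix.smul_mul, Matrix.one_mul,
      h.BJ, Matrix.mul_sub, Matrix.mul_add, Matrix.mul_smul]
    module
  have hJK : J Q Q * K = (t^2*s^2*(t+1)*(s-1)) • J Q Q := by
    simpa [J_tr, hKT] using tr_eq hKJ
  rw [Cub, ← aeval_cubP, ← hK, ← sub_eq_zero]
  apply eq_zero_of_trace
  rw [Matrix.transpose_sub, hKT, Matrix.transpose_smul, J_tr]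
  simp only [Matrix.sub_mul, Matrix.mul_sub, Matrix.smul_mul, Matrix.mul_smul, hKJ, hJK, J_mul_J,
    trace_sub, trace_smul, E2, trace_J, h.cardQ, smul_eq_mul]
  ring
end
end FS
namespace FS
open Matrix

section
variable {V : Type} [Fintype V] {s t : ℕ} {G : SimpleGraph V}

lemma sq_apply (hs : 1 ≤ s)
    (hG : G.IsSRGWith ((s + 1) * (s * t + 1)) (s * (t + 1)) (s - 1) (t + 1)) (x y : V) :
    ∑ z, G.adjMatrix ℝ x z * G.adjMatrix ℝ z y =
      ((s:ℝ)-t-2) * G.adjMatrix ℝ x y + (((s:ℝ)-1)*(t+1)) * (if x = y then 1 else 0) + (t+1) := by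
  have := congrFun (congrFun (hG.matrix_eq (α := ℝ)) x) y
  rw [pow_two, Matrix.mul_apply] at this
  rw [this]
  simp only [Matrix.add_apply, Matrix.smul_apply, Matrix.one_apply, SimpleGraph.adjMatrix_apply,
    SimpleGraph.compl_adj]
  simp only [nsmul_eq_mul]
  push_cast [Nat.cast_sub hs]
  by_cases hxy : x = y
  · subst hxy
    simp
    ring
  · by_cases ha : G.Adj x y
    · simp [hxy, ha]
      ring
    · simp [hxy, ha]

lemma row_sum
    (hG : G.IsSRGWith ((s + 1) * (s * t + 1)) (s * (t + 1)) (s - 1) (t + 1)) (x : V) :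
    ∑ z, G.adjMatrix ℝ x z = s * (t+1) := by
  have h1 := hG.regular x
  have h2 : ∑ z, G.adjMatrix ℝ x z = G.degree x := by
    simp [SimpleGraph.adjMatrix_apply, Finset.sum_ite, ← SimpleGraph.card_neighborFinset_eq_degree,
      SimpleGraph.neighborFinset_eq_filter]
  rw [h2, h1]; push_cast; ring

lemma sum_split (v : V) (f : V → ℝ) :
    ∑ z, f z = f v + ∑ p : G.neighborSet v, f p + ∑ q : {x : V | x ≠ v ∧ ¬ G.Adj v x}, f q := by
  have e1 : ∑ p : G.neighborSet v, f p = ∑ z, if G.Adj v z then f z else 0 := by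
    rw [← Finset.sum_filter]
    exact (Finset.sum_subtype _ (by simp) f).symm
  have e2 : ∑ q : {x : V | x ≠ v ∧ ¬ G.Adj v x}, f q
      = ∑ z, if (z ≠ v ∧ ¬ G.Adj v z) then f z else 0 := by
    rw [← Finset.sum_filter]
    exact (Finset.sum_subtype _ (by simp) f).symm
  have e3 : f v = ∑ z, if z = v then f z else 0 := by simp
  rw [e1, e2, e3, ← Finset.sum_add_distrib, ← Finset.sum_add_distrib]
  refine Finset.sum_congr rfl fun z _ => ?_
  by_cases h1 : z = v
  · subst h1; simp
  · by_cases h2 : G.Adj v z <;> simp [h1, h2]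

/-- blocks -/
noncomputable def blk (G : SimpleGraph V) (S T : Set V) : Matrix S T ℝ :=
  Matrix.of fun x y => G.adjMatrix ℝ (x : V) (y : V)

lemma blk_apply (S T : Set V) (x : S) (y : T) : blk G S T x y = G.adjMatrix ℝ (x : V) (y : V) := rfl

lemma adj_symm (x y : V) : G.adjMatrix ℝ x y = G.adjMatrix ℝ y x := by
  simp [SimpleGraph.adjMatrix_apply, G.adj_comm]

lemma blk_T (S T : Set V) : (blk G S T)ᵀ = blk G T S := by
  ext x y; exact adj_symm _ _

lemma dat (hs : 1 ≤ s)
    (hG : G.IsSRGWith ((s + 1) * (s * t + 1)) (s * (t + 1)) (s - 1) (t + 1)) (v : V) :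
    Dat (G.neighborSet v) {x : V | x ≠ v ∧ ¬ G.Adj v x} (s:ℝ) (t:ℝ)
      (blk G (G.neighborSet v) (G.neighborSet v))
      (blk G (G.neighborSet v) {x : V | x ≠ v ∧ ¬ G.Adj v x})
      (blk G {x : V | x ≠ v ∧ ¬ G.Adj v x} {x : V | x ≠ v ∧ ¬ G.Adj v x}) := by
  have hP : ∀ p : G.neighborSet v, G.adjMatrix ℝ v p = 1 := fun p => by
    have := p.2
    simp only [SimpleGraph.mem_neighborSet] at this
    simp [SimpleGraph.adjMatrix_apply, this]
  have hP' : ∀ p : G.neighborSet v, G.adjMatrix ℝ p v = 1 := fun p => by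
    rw [adj_symm]; exact hP p
  have hQ : ∀ q : {x : V | x ≠ v ∧ ¬ G.Adj v x}, G.adjMatrix ℝ v q = 0 := fun q => by
    have := q.2.2
    simp [SimpleGraph.adjMatrix_apply, this]
  have hQ' : ∀ q : {x : V | x ≠ v ∧ ¬ G.Adj v x}, G.adjMatrix ℝ q v = 0 := fun q => by
    rw [adj_symm]; exact hQ q
  have hvv : G.adjMatrix ℝ v v = 0 := by simp
  have hPv : ∀ p : G.neighborSet v, v ≠ p := fun p => G.ne_of_adj p.2
  have hQv : ∀ q : {x : V | x ≠ v ∧ ¬ G.Adj v x}, v ≠ q := fun q => q.2.1.symm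
  have hPQ : ∀ (p : G.neighborSet v) (q : {x : V | x ≠ v ∧ ¬ G.Adj v x}), (p : V) ≠ q :=
    fun p q h => q.2.2 (h ▸ p.2)
  have hsq := sq_apply hs hG
  have hrow := row_sum hG
  have rC : ∀ p : G.neighborSet v, ∑ z : G.neighborSet v, G.adjMatrix ℝ p z = s - 1 := by
    intro p
    have := hsq v p
    rw [sum_split (G := G) v] at this
    simp only [hvv, hP, hQ, zero_mul, one_mul, Finset.sum_const_zero, if_neg (hPv p)] at this
    have e := Finset.sum_congr (s₁ := (Finset.univ : Finset (G.neighborSet v))) rfl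
      (fun z _ => adj_symm (G := G) (p : V) (z : V))
    refine e.trans ?_
    linarith
  have rNT : ∀ q : {x : V | x ≠ v ∧ ¬ G.Adj v x},
      ∑ z : G.neighborSet v, G.adjMatrix ℝ q z = t + 1 := by
    intro q
    have := hsq v q
    rw [sum_split (G := G) v] at this
    simp only [hvv, hP, hQ, zero_mul, one_mul, Finset.sum_const_zero, if_neg (hQv q)] at this
    have e := Finset.sum_congr (s₁ := (Finset.univ : Finset (G.neighborSet v))) rfl
      (fun z _ => adj_symm (G := G) (q : V) (z : V))
    refine e.trans ?_
    linarith
  have rN : ∀ p : G.neighborSet v,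
      ∑ z : {x : V | x ≠ v ∧ ¬ G.Adj v x}, G.adjMatrix ℝ p z = s * t := by
    intro p
    have := hrow p
    rw [sum_split (G := G) v, rC, hP'] at this
    linarith
  have rB : ∀ q : {x : V | x ≠ v ∧ ¬ G.Adj v x},
      ∑ z : {x : V | x ≠ v ∧ ¬ G.Adj v x}, G.adjMatrix ℝ q z = (t+1) * (s - 1) := by
    intro q
    have := hrow q
    rw [sum_split (G := G) v, rNT, hQ'] at this
    linarith
  have cP : (Fintype.card (G.neighborSet v) : ℝ) = s * (t + 1) := by
    have := hrow v
    rw [sum_split (G := G) v] at this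
    simp only [hvv, hP, hQ, Finset.sum_const_zero] at this
    simpa using this
  have cQ : (Fintype.card {x : V | x ≠ v ∧ ¬ G.Adj v x} : ℝ) = s ^ 2 * t := by
    have h1 : (Fintype.card V : ℝ) = (s + 1) * (s * t + 1) := by
      rw [hG.card]; push_cast; ring
    have := sum_split (G := G) v (fun _ => (1:ℝ))
    simp only [Finset.sum_const, Finset.card_univ, nsmul_eq_mul, mul_one, cP, h1] at this
    linarith
  have idem : ∀ x y : V, G.adjMatrix ℝ x y * G.adjMatrix ℝ y x = G.adjMatrix ℝ x y := by
    intro x y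
    by_cases h : G.Adj x y <;> simp [SimpleGraph.adjMatrix_apply, h, G.adj_comm y x]
  refine ⟨blk_T _ _, blk_T _ _, ?_, ?_, ?_, ?_, ?_, ?_, ?_, cP, cQ, ?_, ?_, ?_, ?_⟩
  · rw [blk_T]
    ext x y
    have := hsq x y
    rw [sum_split (G := G) v, hP, hP'] at this
    simp only [Matrix.add_apply, Matrix.smul_apply, Matrix.mul_apply, blk_apply, J, Matrix.of_apply,
      Matrix.one_apply, Subtype.ext_iff, smul_eq_mul]
    linarith
  · ext x y
    have := hsq x y
    rw [sum_split (G := G) v, hQ, if_neg (hPQ x y)] at this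
    simp only [Matrix.add_apply, Matrix.smul_apply, Matrix.mul_apply, blk_apply, J, Matrix.of_apply,
      smul_eq_mul]
    linarith
  · rw [blk_T]
    ext x y
    have := hsq x y
    rw [sum_split (G := G) v, hQ, hQ'] at this
    simp only [Matrix.add_apply, Matrix.smul_apply, Matrix.mul_apply, blk_apply, J, Matrix.of_apply,
      Matrix.one_apply, Subtype.ext_iff, smul_eq_mul]
    linarith
  · ext x y
    simp only [Matrix.smul_apply, Matrix.mul_apply, blk_apply, J, Matrix.of_apply, smul_eq_mul,
      mul_one, rC]
  · ext x y
    simp only [Matrix.smul_apply, Matrix.mul_apply, blk_apply, J, Matrix.of_apply, smul_eq_mul,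
      mul_one, rN]
  · rw [blk_T]
    ext x y
    simp only [Matrix.smul_apply, Matrix.mul_apply, blk_apply, J, Matrix.of_apply, smul_eq_mul,
      mul_one, rNT]
  · ext x y
    simp only [Matrix.smul_apply, Matrix.mul_apply, blk_apply, J, Matrix.of_apply, smul_eq_mul,
      mul_one, rB]
  · simp [Matrix.trace, blk_apply]
  · simp only [Matrix.trace, Matrix.diag_apply, Matrix.mul_apply, blk_apply, idem, rC,
      Finset.sum_const, Finset.card_univ, nsmul_eq_mul, cP]
  · simp [Matrix.trace, blk_apply]
  · simp only [Matrix.trace, Matrix.diag_apply, Matrix.mul_apply, blk_apply, idem, rB,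
      Finset.sum_const, Finset.card_univ, nsmul_eq_mul, cQ]

lemma blk_add_one (S : Set V) (x y : S) :
    (blk G S S + 1) x y = if (x = y ∨ G.Adj x y) then 1 else 0 := by
  by_cases h : x = y
  · subst h; simp [blk_apply]
  · simp [blk_apply, h, Matrix.one_apply]

lemma EE_iff (S : Set V) (s : ℝ) (c : Matrix S S ℝ) :
    c * c = (s-2) • c + (s-1) • (1 : Matrix S S ℝ) ↔ (c + 1) * (c + 1) = s • (c + 1) := by
  have : (c + 1) * (c + 1) = c * c + c + c + 1 := by noncomm_ring
  rw [this]
  constructor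
  · intro h
    linear_combination (norm := module) h
  · intro h
    linear_combination (norm := module) h

lemma quad_of_cliques (S : Set V)
    (he : Equivalence (fun x y : S => x = y ∨ G.Adj ↑x ↑y))
    (hc : ∀ u : S, {w : S | w = u ∨ G.Adj ↑w ↑u}.ncard = s) :
    blk G S S * blk G S S = ((s:ℝ)-2) • blk G S S + ((s:ℝ)-1) • (1 : Matrix S S ℝ) := by
  rw [EE_iff]
  ext x y
  rw [Matrix.mul_apply]
  simp only [Matrix.smul_apply, blk_add_one, smul_eq_mul]
  by_cases h : x = y ∨ G.Adj (x:V) y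
  · rw [if_pos h, ← hc y, Set.ncard_eq_toFinset_card', mul_one, Finset.cast_card, ]
    rw [← Finset.sum_subset (Finset.subset_univ
      ({w : S | w = y ∨ G.Adj ↑w ↑y}.toFinset))]
    · refine Finset.sum_congr rfl fun z hz => ?_
      have hz' : z = y ∨ G.Adj (z:V) y := by simpa using hz
      have hxz : x = z ∨ G.Adj (x:V) z := he.trans h (he.symm hz')
      rw [if_pos hz', if_pos hxz, one_mul]
    · intro z _ hz
      have hz' : ¬ (z = y ∨ G.Adj (z:V) y) := by simpa using hz
      rw [if_neg hz', mul_zero]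
  · rw [if_neg h, mul_zero]
    refine Finset.sum_eq_zero fun z _ => ?_
    by_cases h1 : x = z ∨ G.Adj (x:V) z
    · rw [if_neg (fun h2 => h (he.trans h1 h2)), mul_zero]
    · rw [if_neg h1, zero_mul]

lemma equiv_of_quad (S : Set V)
    (hq : blk G S S * blk G S S = ((s:ℝ)-2) • blk G S S + ((s:ℝ)-1) • (1 : Matrix S S ℝ)) :
    Equivalence (fun x y : S => x = y ∨ G.Adj ↑x ↑y) := by
  rw [EE_iff] at hq
  refine ⟨fun x => Or.inl rfl, fun {x y} h => h.imp Eq.symm (fun h => h.symm), fun {x y z} h1 h2 => ?_⟩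
  by_contra h
  have := congrFun (congrFun hq x) z
  rw [Matrix.mul_apply] at this
  simp only [Matrix.smul_apply, blk_add_one, smul_eq_mul] at this
  rw [if_neg h, mul_zero, Finset.sum_eq_zero_iff_of_nonneg] at this
  · have := this y (Finset.mem_univ _)
    rw [if_pos h1, if_pos h2] at this
    norm_num at this
  · intro i _
    positivity

lemma ncard_cls (S : Set V) (hr : ∀ p : S, ∑ z : S, blk G S S p z = (s:ℝ) - 1) (u : S) :
    {w : S | w = u ∨ G.Adj ↑w ↑u}.ncard = s := by
  have h1 : ∑ z : S, (blk G S S + 1) u z = s := by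
    simp only [Matrix.add_apply, Finset.sum_add_distrib, hr, Matrix.one_apply]
    simp
  simp only [blk_add_one, Finset.sum_boole] at h1
  rw [Set.ncard_eq_toFinset_card']
  have h2 : {w : S | w = u ∨ G.Adj ↑w ↑u}.toFinset
      = Finset.univ.filter (fun w : S => u = w ∨ G.Adj (u:V) w) := by
    ext w; simp [G.adj_comm, eq_comm]
  rw [h2]
  exact_mod_cast h1

lemma ncard_classes (S : Set V) (hs : 0 < s)
    (he : Equivalence (fun x y : S => x = y ∨ G.Adj ↑x ↑y))
    (hc : ∀ u : S, {w : S | w = u ∨ G.Adj ↑w ↑u}.ncard = s)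
    (hS : Fintype.card S = s * (t+1)) :
    {T : Set S | ∃ u : S, T = {w | w = u ∨ G.Adj ↑w ↑u}}.ncard = t + 1 := by
  have h0 : {T : Set S | ∃ u : S, T = {w | w = u ∨ G.Adj ↑w ↑u}} =
      ((Finset.univ.image (fun u : S => ({w | w = u ∨ G.Adj ↑w ↑u} : Set S)) : Finset (Set S)) :
        Set (Set S)) := by
    ext T; simp [eq_comm]
  rw [h0, Set.ncard_coe_finset]
  have h1 := Finset.card_eq_sum_card_image (fun u : S => ({w | w = u ∨ G.Adj ↑w ↑u} : Set S))
    Finset.univ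
  rw [Finset.card_univ, hS, Finset.sum_const_nat (m := s)] at h1
  · have : s * (t+1) = s * (Finset.univ.image
      (fun u : S => ({w | w = u ∨ G.Adj ↑w ↑u} : Set S))).card := by rw [h1, mul_comm]
    exact (Nat.eq_of_mul_eq_mul_left hs this).symm
  · intro T hT
    obtain ⟨u, -, rfl⟩ := Finset.mem_image.1 hT
    rw [← hc u, Set.ncard_eq_toFinset_card']
    congr 1
    ext x
    simp only [Finset.mem_filter, Finset.mem_univ, true_and, Set.mem_toFinset, Set.mem_ofPred_eq]
    constructor
    · intro h
      have : x ∈ ({w | w = x ∨ G.Adj ↑w ↑x} : Set S) := Or.inl rfl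
      rw [h] at this
      exact this
    · intro h
      ext w
      exact ⟨fun hw => he.trans hw h, fun hw => he.trans hw (he.symm h)⟩
end
end FS

/-- Lemma on the spectrum of the second subconstituent. Let `s ≥ t ≥ 2` and
let `Γ` be strongly regular with parameters `((s+1)(st+1), s(t+1), s−1, t+1)` and `v` a
vertex. Let `C` be the first subconstituent (induced on `N(v)`) and `B` the second
subconstituent. With `m₂(s+t) = s²(t²−1)` and `m₄(s+t) = t(s−1)(s²−t)`, the graph `C` is a
disjoint union of `t+1` cliques of size `s` iff the characteristic polynomial of the
adjacency matrix of `B` is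
`(X−(t+1)(s−1)) (X−(s−1))^{m₂} (X−(s−t−1))^{(t+1)(s−1)} (X+(t+1))^{m₄}`. -/
theorem firstSubconstituent_cliques_iff_charpoly {V : Type} [Fintype V]
    (s t : ℕ) (hts : t ≤ s) (ht : 2 ≤ t) (G : SimpleGraph V)
    (hG : G.IsSRGWith ((s + 1) * (s * t + 1)) (s * (t + 1)) (s - 1) (t + 1))
    (v : V) (m2 m4 : ℕ)
    (hm2 : m2 * (s + t) = s ^ 2 * (t ^ 2 - 1))
    (hm4 : m4 * (s + t) = t * (s - 1) * (s ^ 2 - t)) :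
    (Equivalence (fun x y : G.neighborSet v => x = y ∨ G.Adj ↑x ↑y) ∧
      (∀ u : G.neighborSet v,
        {w : G.neighborSet v | w = u ∨ G.Adj ↑w ↑u}.ncard = s) ∧
      {S : Set (G.neighborSet v) |
        ∃ u : G.neighborSet v, S = {w | w = u ∨ G.Adj ↑w ↑u}}.ncard = t + 1)
    ↔
    Matrix.charpoly ((G.induce {x : V | x ≠ v ∧ ¬ G.Adj v x}).adjMatrix ℚ) =
      (X - C (((t : ℚ) + 1) * ((s : ℚ) - 1))) *
      (X - C ((s : ℚ) - 1)) ^ m2 *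
      (X - C ((s : ℚ) - (t : ℚ) - 1)) ^ ((t + 1) * (s - 1)) *
      (X + C ((t : ℚ) + 1)) ^ m4 := by
  have hs1 : 1 ≤ s := by omega
  have hsR : (1:ℝ) < s := by exact_mod_cast (by omega : 1 < s)
  have htR : (0:ℝ) < t := by exact_mod_cast (by omega : 0 < t)
  have hD := FS.dat hs1 hG v
  have hm2' : (m2 : ℝ) * (s + t) = (s:ℝ) ^ 2 * ((t:ℝ) ^ 2 - 1) := by
    have h1 : 1 ≤ t ^ 2 := Nat.one_le_pow _ _ (by omega)
    have := congrArg (Nat.cast : ℕ → ℝ) hm2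
    push_cast [Nat.cast_sub h1] at this
    exact this
  have hm4' : (m4 : ℝ) * (s + t) = (t:ℝ) * (s - 1) * ((s:ℝ) ^ 2 - t) := by
    have h1 : t ≤ s ^ 2 := by nlinarith
    have := congrArg (Nat.cast : ℕ → ℝ) hm4
    push_cast [Nat.cast_sub h1, Nat.cast_sub hs1] at this
    exact this
  have hk : (((t+1)*(s-1) : ℕ) : ℝ) = ((t:ℝ)+1)*((s:ℝ)-1) := by
    push_cast [Nat.cast_sub hs1]; ring
  have hmap : ((G.induce {x : V | x ≠ v ∧ ¬ G.Adj v x}).adjMatrix ℚ).map (algebraMap ℚ ℝ)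
      = FS.blk G {x : V | x ≠ v ∧ ¬ G.Adj v x} {x : V | x ≠ v ∧ ¬ G.Adj v x} := by
    ext x y
    by_cases h : G.Adj (x:V) y <;> simp [FS.blk_apply, SimpleGraph.adjMatrix_apply, h]
  have hcp : (Matrix.charpoly ((G.induce {x : V | x ≠ v ∧ ¬ G.Adj v x}).adjMatrix ℚ) =
      (X - C (((t : ℚ) + 1) * ((s : ℚ) - 1))) *
      (X - C ((s : ℚ) - 1)) ^ m2 *
      (X - C ((s : ℚ) - (t : ℚ) - 1)) ^ ((t + 1) * (s - 1)) *
      (X + C ((t : ℚ) + 1)) ^ m4) ↔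
      (FS.blk G {x : V | x ≠ v ∧ ¬ G.Adj v x} {x : V | x ≠ v ∧ ¬ G.Adj v x}).charpoly =
      (X - C (((t : ℝ) + 1) * ((s : ℝ) - 1))) *
      (X - C ((s : ℝ) - 1)) ^ m2 *
      (X - C ((s : ℝ) - (t : ℝ) - 1)) ^ ((t + 1) * (s - 1)) *
      (X + C ((t : ℝ) + 1)) ^ m4 := by
    rw [← (Polynomial.map_injective (algebraMap ℚ ℝ) (algebraMap ℚ ℝ).injective).eq_iff,
      ← Matrix.charpoly_map, hmap]
    simp [Polynomial.map_mul, Polynomial.map_pow, Polynomial.map_sub, Polynomial.map_add]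
  rw [hcp]
  constructor
  · rintro ⟨he, hc, -⟩
    exact hD.charpoly_of hsR htR m2 m4 _ hm2' hm4' hk
      (hD.cub_of (FS.quad_of_cliques _ he hc))
  · intro h
    have hq := hD.of_cub (hD.of_charpoly hsR htR m2 m4 _ h)
    have he := FS.equiv_of_quad _ hq
    have hc : ∀ u : G.neighborSet v,
        {w : G.neighborSet v | w = u ∨ G.Adj ↑w ↑u}.ncard = s := by
      apply FS.ncard_cls
      intro p
      have := congrFun (congrFun hD.cJ p) p
      simp [Matrix.mul_apply, FS.J] at this
      convert this
    refine ⟨he, hc, FS.ncard_classes _ (by omega) he hc ?_⟩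
    exact_mod_cast hD.cardP
end

section
/- Let s, t ≥ 1, let Γ be a strongly regular graph with parameters ((s+1)(st+1), s(t+1), s−1, t+1), and let v be a vertex such that the subgraph induced on the neighbourhood N(v) is a disjoint union of cliques. Then each of these cliques has exactly s vertices (so there are exactly t+1 of them), and every vertex x with x ≠ v and x not adjacent to v has exactly one neighbour in each clique; that is, for every u ∈ N(v), the set N(x) ∩ ({u} ∪ (N(u) ∩ N(v))) has exactly one element. -/
open scoped Classical

/-- Let `s, t ≥ 1`, let `Γ` be strongly regular with parameters
`((s+1)(st+1), s(t+1), s−1, t+1)`, and let `v` be a vertex whose neighbourhood induces a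
disjoint union of cliques (i.e. "equal or adjacent" is an equivalence relation on `N(v)`).
Then each clique `{u} ∪ (N(u) ∩ N(v))` has exactly `s` vertices, there are exactly `t + 1`
cliques, and every vertex `x ≠ v` not adjacent to `v` has exactly one neighbour in each
clique. -/
theorem cliques_of_firstSubconstituent {V : Type} [Fintype V]
    (s t : ℕ) (hs : 1 ≤ s) (ht : 1 ≤ t) (G : SimpleGraph V)
    (hG : G.IsSRGWith ((s + 1) * (s * t + 1)) (s * (t + 1)) (s - 1) (t + 1))
    (v : V)
    (hcl : Equivalence (fun x y : G.neighborSet v => x = y ∨ G.Adj ↑x ↑y)) :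
    (∀ u ∈ G.neighborSet v,
      ({u} ∪ (G.neighborSet u ∩ G.neighborSet v) : Set V).ncard = s) ∧
    {S : Set V | ∃ u ∈ G.neighborSet v,
      S = {u} ∪ (G.neighborSet u ∩ G.neighborSet v)}.ncard = t + 1 ∧
    ∀ x : V, x ≠ v → ¬ G.Adj v x → ∀ u ∈ G.neighborSet v,
      (G.neighborSet x ∩ ({u} ∪ (G.neighborSet u ∩ G.neighborSet v))).ncard = 1 := by
  set f : V → Finset V := fun u => insert u (G.neighborFinset u ∩ G.neighborFinset v) with hf
  have hset : ∀ u, ({u} ∪ (G.neighborSet u ∩ G.neighborSet v) : Set V) = (f u : Set V) := by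
    intro u; ext y; simp [hf]
  have htr : ∀ a b c, G.Adj v a → G.Adj v b → G.Adj v c → (a = b ∨ G.Adj a b) →
      (b = c ∨ G.Adj b c) → (a = c ∨ G.Adj a c) := by
    intro a b c ha hb hc h1 h2
    have := hcl.trans (x := ⟨a, ha⟩) (y := ⟨b, hb⟩) (z := ⟨c, hc⟩)
    exact (this (h1.imp Subtype.ext id) (h2.imp Subtype.ext id)).imp (congrArg Subtype.val) id
  have hmem : ∀ u y, G.Adj v u → (y ∈ f u ↔ G.Adj v y ∧ (u = y ∨ G.Adj u y)) := by
    intro u y hu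
    simp only [hf, Finset.mem_insert, Finset.mem_inter, SimpleGraph.mem_neighborFinset]
    constructor
    · rintro (rfl | h)
      · exact ⟨hu, Or.inl rfl⟩
      · exact ⟨h.2, Or.inr h.1⟩
    · rintro ⟨h, rfl | h'⟩
      · exact Or.inl rfl
      · exact Or.inr ⟨h', h⟩
  have hcomm : ∀ a b, G.Adj a b → (G.neighborFinset a ∩ G.neighborFinset b).card = s - 1 := by
    intro a b h
    rw [← hG.of_adj a b h, ← Set.toFinset_card]
    congr 1; ext y; simp [SimpleGraph.mem_commonNeighbors]
  have hncomm : ∀ a b, a ≠ b → ¬ G.Adj a b →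
      (G.neighborFinset a ∩ G.neighborFinset b).card = t + 1 := by
    intro a b hne h
    rw [← hG.of_not_adj hne h, ← Set.toFinset_card]
    congr 1; ext y; simp [SimpleGraph.mem_commonNeighbors]
  have hfcard : ∀ u, G.Adj v u → (f u).card = s := by
    intro u hu
    rw [hf]
    simp only
    rw [Finset.card_insert_of_notMem (by simp), hcomm u v hu.symm]
    omega
  have hfeq : ∀ u a, G.Adj v u → G.Adj v a → (f a = f u ↔ a ∈ f u) := by
    intro u a hu ha
    constructor
    · intro h; rw [← h]; simp [hf]
    · intro h
      have h1 := ((hmem u a hu).1 h).2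
      have h2 : a = u ∨ G.Adj a u := h1.imp Eq.symm (fun h => h.symm)
      ext y
      rw [hmem u y hu, hmem a y ha]
      constructor
      · rintro ⟨hy, h3⟩
        exact ⟨hy, htr u a y hu ha hy h1 h3⟩
      · rintro ⟨hy, h3⟩
        exact ⟨hy, htr a u y ha hu hy h2 h3⟩
  set N := G.neighborFinset v with hN
  have hNm : ∀ y, y ∈ N ↔ G.Adj v y := by intro y; simp [hN]
  have hfib : ∀ (x : Finset V), x ⊆ N → ∀ S ∈ N.image f, x.filter (fun a => f a = S) = x ∩ S := by
    intro x hx S hS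
    obtain ⟨u, hu, rfl⟩ := Finset.mem_image.1 hS
    ext a
    simp only [Finset.mem_filter, Finset.mem_inter]
    constructor
    · rintro ⟨h, h'⟩
      exact ⟨h, (hfeq u a ((hNm u).1 hu) ((hNm a).1 (hx h))).1 h'⟩
    · rintro ⟨h, h'⟩
      exact ⟨h, (hfeq u a ((hNm u).1 hu) ((hNm a).1 (hx h))).2 h'⟩
  have hsum : ∀ (x : Finset V), x ⊆ N → x.card = ∑ S ∈ N.image f, (x ∩ S).card := by
    intro x hx
    rw [Finset.card_eq_sum_card_fiberwise (f := f) (t := N.image f)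
      (fun a ha => Finset.mem_image_of_mem f (hx ha))]
    exact Finset.sum_congr rfl fun S hS => by rw [hfib x hx S hS]
  have himg : (N.image f).card = t + 1 := by
    have h1 := hsum N subset_rfl
    have h2 : ∀ S ∈ N.image f, (N ∩ S).card = s := by
      intro S hS
      obtain ⟨u, hu, rfl⟩ := Finset.mem_image.1 hS
      have hu' := (hNm u).1 hu
      rw [Finset.inter_eq_right.2 (fun y hy => (hNm y).2 ((hmem u y hu').1 hy).1), hfcard u hu']
    rw [Finset.sum_congr rfl h2, Finset.sum_const, smul_eq_mul] at h1
    have h3 : N.card = s * (t + 1) := hG.regular v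
    rw [h3, mul_comm] at h1
    exact (Nat.eq_of_mul_eq_mul_right (by omega) h1).symm
  refine ⟨?_, ?_, ?_⟩
  · intro u hu
    rw [hset, Set.ncard_coe_finset, hfcard u hu]
  · have : {S : Set V | ∃ u ∈ G.neighborSet v,
      S = {u} ∪ (G.neighborSet u ∩ G.neighborSet v)} =
        (fun F : Finset V => (F : Set V)) '' (N.image f : Set (Finset V)) := by
      ext S
      simp only [hset, Set.mem_ofPred_eq, Set.mem_image, Finset.mem_coe, Finset.mem_image]
      constructor
      · rintro ⟨u, hu, rfl⟩
        exact ⟨f u, ⟨u, (hNm u).2 hu, rfl⟩, rfl⟩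
      · rintro ⟨_, ⟨u, hu, rfl⟩, rfl⟩
        exact ⟨u, (hNm u).1 hu, rfl⟩
    rw [this, Set.ncard_image_of_injective _ Finset.coe_injective, Set.ncard_coe_finset, himg]
  · intro x hxv hx u hu
    have hle : ∀ S ∈ N.image f, ((G.neighborFinset x ∩ N) ∩ S).card ≤ 1 := by
      intro S hS
      obtain ⟨w, hw, rfl⟩ := Finset.mem_image.1 hS
      have hw' := (hNm w).1 hw
      rw [Finset.card_le_one]
      intro a ha b hb
      by_contra hab
      simp only [Finset.mem_inter, SimpleGraph.mem_neighborFinset, hNm, hmem w _ hw'] at ha hb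
      obtain ⟨⟨hxa, hva⟩, -, hwa⟩ := ha
      obtain ⟨⟨hxb, hvb⟩, -, hwb⟩ := hb
      have hadj : G.Adj a b :=
        (htr a w b hva hw' hvb (hwa.imp Eq.symm (fun h => h.symm)) hwb).resolve_left hab
      have hsub : insert x (insert v ((G.neighborFinset a ∩ N).erase b)) ⊆
          G.neighborFinset a ∩ G.neighborFinset b := by
        intro y hy
        simp only [Finset.mem_insert, Finset.mem_erase, Finset.mem_inter, hNm,
          SimpleGraph.mem_neighborFinset] at hy ⊢
        rcases hy with rfl | rfl | ⟨hyb, hay, hvy⟩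
        · exact ⟨hxa.symm, hxb.symm⟩
        · exact ⟨hva.symm, hvb.symm⟩
        · exact ⟨hay, (htr b a y hvb hva hvy (Or.inr hadj.symm) (Or.inr hay)).resolve_left
            (Ne.symm hyb)⟩
      have hc := Finset.card_le_card hsub
      have hbm : b ∈ G.neighborFinset a ∩ N := by simp [hNm, hadj, hvb]
      have hpos := Finset.card_pos.2 ⟨b, hbm⟩
      have hk := hcomm a v hva.symm
      rw [← hN] at hk
      rw [Finset.card_insert_of_notMem (by simp [hxv, hNm, hx]),
        Finset.card_insert_of_notMem (by simp [hNm]), Finset.card_erase_of_mem hbm,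
        hcomm a b hadj] at hc
      omega
    have h1 := hsum (G.neighborFinset x ∩ N) Finset.inter_subset_right
    rw [hncomm x v hxv (fun h => hx h.symm), ← himg, Finset.card_eq_sum_ones] at h1
    have h2 := (Finset.sum_eq_sum_iff_of_le hle).1 h1.symm (f u)
      (Finset.mem_image_of_mem f ((hNm u).2 hu))
    rw [hset, ← h2, ← Set.ncard_coe_finset]
    congr 1
    ext y
    simp only [Set.mem_inter_iff, Finset.mem_coe, Finset.mem_inter, hNm, hmem u y hu,
      SimpleGraph.mem_neighborFinset, SimpleGraph.mem_neighborSet]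
    tauto
end

section
/- Let s ≥ t ≥ 2, let Γ be a strongly regular graph with parameters ((s+1)(st+1), s(t+1), s−1, t+1), and let v be a regular point of Γ. Let x and y be distinct vertices, both distinct from v and not adjacent to v, such that y lies in the span {v,x}^{⊥⊥}. Then N(x) ∩ N(y) = N(v) ∩ N(x); in particular, x and y have no common neighbour outside the neighbourhood of v. -/
open scoped Classical

/-- For a graph `G` and a set `X` of vertices, `X^⊥` is the set of vertices `w` such that
for every `x ∈ X`, either `w = x` or `w` is adjacent to `x`. -/
def perp {V : Type*} (G : SimpleGraph V) (X : Set V) : Set V :=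
  {w | ∀ x ∈ X, w = x ∨ G.Adj w x}

/-- A vertex `v` of a strongly regular graph with parameters
`((s+1)(st+1), s(t+1), s−1, t+1)` is a regular point if (i) the subgraph induced on `N(v)`
is a disjoint union of cliques, and (ii) for every vertex `x ≠ v` not adjacent to `v`, the
span `{v,x}^{⊥⊥}` has exactly `t + 1` elements and is a coclique. -/
def IsRegularPoint {V : Type*} (G : SimpleGraph V) (t : ℕ) (v : V) : Prop :=
  Equivalence (fun x y : G.neighborSet v => x = y ∨ G.Adj ↑x ↑y) ∧
  ∀ x : V, x ≠ v → ¬ G.Adj v x →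
    (perp G (perp G {v, x})).ncard = t + 1 ∧
    ∀ y ∈ perp G (perp G {v, x}), ∀ z ∈ perp G (perp G {v, x}), ¬ G.Adj y z

/-- Let `s ≥ t ≥ 2`, `Γ` strongly regular with parameters
`((s+1)(st+1), s(t+1), s−1, t+1)` and `v` a regular point. If `x, y` are distinct vertices,
both distinct from `v` and not adjacent to `v`, with `y` in the span `{v,x}^{⊥⊥}`, then
`N(x) ∩ N(y) = N(v) ∩ N(x)`; in particular `x` and `y` have no common neighbour outside
`N(v)`. -/
theorem span_common_neighbors {V : Type} [Fintype V]
    (s t : ℕ) (hts : t ≤ s) (ht : 2 ≤ t) (G : SimpleGraph V)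
    (hG : G.IsSRGWith ((s + 1) * (s * t + 1)) (s * (t + 1)) (s - 1) (t + 1))
    (v : V) (hreg : IsRegularPoint G t v)
    (x y : V) (hxy : x ≠ y) (hxv : x ≠ v) (hyv : y ≠ v)
    (hxa : ¬ G.Adj v x) (hya : ¬ G.Adj v y)
    (hspan : y ∈ perp G (perp G {v, x})) :
    G.neighborSet x ∩ G.neighborSet y = G.neighborSet v ∩ G.neighborSet x ∧
    ∀ w ∈ G.neighborSet x ∩ G.neighborSet y, w ∈ G.neighborSet v := by
  have hxs : x ∈ perp G (perp G {v, x}) := by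
    intro w hw
    rcases hw x (by simp) with h | h
    · exact Or.inl h.symm
    · exact Or.inr h.symm
  have hna : ¬ G.Adj x y := (hreg.2 x hxv hxa).2 x hxs y hspan
  have hsub : G.neighborSet v ∩ G.neighborSet x ⊆ G.neighborSet x ∩ G.neighborSet y := by
    rintro w ⟨hv, hx⟩
    rw [SimpleGraph.mem_neighborSet] at hv hx
    refine ⟨hx, ?_⟩
    have hw : w ∈ perp G {v, x} := by
      intro z hz
      rcases hz with rfl | hz
      · exact Or.inr hv.symm
      · rw [Set.mem_singleton_iff] at hz
        subst hz
        exact Or.inr hx.symm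
    rcases hspan w hw with h | h
    · subst h
      exact absurd hv hya
    · exact h
  have h1 : (G.neighborSet v ∩ G.neighborSet x).ncard = t + 1 := by
    have := hG.of_not_adj hxv.symm hxa
    rw [← this, ← Nat.card_eq_fintype_card]
    rfl
  have h2 : (G.neighborSet x ∩ G.neighborSet y).ncard = t + 1 := by
    have := hG.of_not_adj hxy hna
    rw [← this, ← Nat.card_eq_fintype_card]
    rfl
  have heq := Set.eq_of_subset_of_ncard_le hsub (by omega) (Set.toFinite _)
  refine ⟨heq.symm, fun w hw => ?_⟩
  rw [← heq] at hw
  exact hw.1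
end

section
/- Let s ≥ t ≥ 2, let Γ be a strongly regular graph with parameters ((s+1)(st+1), s(t+1), s−1, t+1), and let v be a regular point of Γ. Let u, w ∈ N(v) be non-adjacent. Then u and w have exactly t+1 common neighbours, one of which is v; every common neighbour x ≠ v of u and w satisfies x ∉ N(v); and any two common neighbours x, y ≠ v of u and w lie in a common fibre, i.e., N(v) ∩ N(x) = N(v) ∩ N(y). -/
open scoped Classical

/-- Let `s ≥ t ≥ 2`, `Γ` strongly regular with parameters
`((s+1)(st+1), s(t+1), s−1, t+1)`, `v` a regular point, and `u, w ∈ N(v)` non-adjacent.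
Then `u` and `w` have exactly `t + 1` common neighbours, one of which is `v`; every common
neighbour `x ≠ v` lies outside `N(v)`; and any two common neighbours `x, y ≠ v` lie in a
common fibre, i.e. `N(v) ∩ N(x) = N(v) ∩ N(y)`. -/
theorem common_neighbors_in_first_subconstituent {V : Type} [Fintype V]
    (s t : ℕ) (hts : t ≤ s) (ht : 2 ≤ t) (G : SimpleGraph V)
    (hG : G.IsSRGWith ((s + 1) * (s * t + 1)) (s * (t + 1)) (s - 1) (t + 1))
    (v : V) (hreg : IsRegularPoint G t v)
    (u w : V) (hu : u ∈ G.neighborSet v) (hw : w ∈ G.neighborSet v)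
    (huw : u ≠ w) (hnadj : ¬ G.Adj u w) :
    (G.commonNeighbors u w).ncard = t + 1 ∧
    v ∈ G.commonNeighbors u w ∧
    (∀ x ∈ G.commonNeighbors u w, x ≠ v → x ∉ G.neighborSet v) ∧
    ∀ x ∈ G.commonNeighbors u w, ∀ y ∈ G.commonNeighbors u w, x ≠ v → y ≠ v →
      G.neighborSet v ∩ G.neighborSet x = G.neighborSet v ∩ G.neighborSet y := by
  have hu' : G.Adj v u := hu
  have hw' : G.Adj v w := hw
  have hcard : (G.commonNeighbors u w).ncard = t + 1 := by
    rw [← hG.of_not_adj huw hnadj, ← Nat.card_coe_set_eq, Nat.card_eq_fintype_card]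
  have hout : ∀ x ∈ G.commonNeighbors u w, x ≠ v → ¬ G.Adj v x := by
    intro x hx _ hvx
    obtain ⟨hux, hwx⟩ := (G.mem_commonNeighbors).1 hx
    have h := hreg.1.trans (x := ⟨u, hu⟩) (y := ⟨x, hvx⟩) (z := ⟨w, hw⟩)
      (Or.inr hux) (Or.inr hwx.symm)
    rcases h with h | h
    · exact huw (congrArg Subtype.val h)
    · exact hnadj h
  have key : ∀ x ∈ G.commonNeighbors u w, ∀ y ∈ G.commonNeighbors u w, x ≠ v → y ≠ v →
      G.neighborSet v ∩ G.neighborSet x ⊆ G.neighborSet v ∩ G.neighborSet y := by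
    intro x hx y hy hxv hyv
    have hvx := hout x hx hxv
    obtain ⟨hux, hwx⟩ := (G.mem_commonNeighbors).1 hx
    obtain ⟨hc, hco⟩ := hreg.2 x hxv hvx
    have hmem : ∀ z, G.Adj v z → G.Adj x z → z ∈ perp G {v, x} := by
      intro z h1 h2 a ha
      rcases ha with rfl | rfl
      · exact Or.inr h1.symm
      · exact Or.inr h2.symm
    have hvS : v ∈ perp G (perp G {v, x}) := by
      intro a ha
      rcases ha v (by simp) with h | h
      · exact Or.inl h.symm
      · exact Or.inr h.symm
    have huP := hmem u hu' hux.symm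
    have hwP := hmem w hw' hwx.symm
    have hsub : perp G (perp G {v, x}) ⊆ G.commonNeighbors u w := by
      intro z hz
      rw [G.mem_commonNeighbors]
      constructor
      · rcases hz u huP with rfl | h
        · exact absurd hu' (hco v hvS z hz)
        · exact h.symm
      · rcases hz w hwP with rfl | h
        · exact absurd hw' (hco v hvS z hz)
        · exact h.symm
    have heq := Set.eq_of_subset_of_ncard_le hsub (by rw [hcard, hc]) (Set.toFinite _)
    have hyS : y ∈ perp G (perp G {v, x}) := by rw [heq]; exact hy
    rintro z ⟨hz1, hz2⟩
    refine ⟨hz1, ?_⟩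
    rcases hyS z (hmem z hz1 hz2) with rfl | h
    · exact absurd hz1 (hout y hy hyv)
    · exact h
  refine ⟨hcard, (G.mem_commonNeighbors).2 ⟨hu'.symm, hw'.symm⟩, hout, ?_⟩
  intro x hx y hy hxv hyv
  exact Set.Subset.antisymm (key x hx y hy hxv hyv) (key y hy x hx hyv hxv)
end

section
/- Let s ≥ t ≥ 2, let Γ be a strongly regular graph with parameters ((s+1)(st+1), s(t+1), s−1, t+1), and let v be a regular point of Γ. Then any two adjacent vertices x, y that are both distinct from v and not adjacent to v have exactly one common neighbour in N(v); equivalently, x and y have exactly s−2 common neighbours among the vertices distinct from v and not adjacent to v. -/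
open scoped Classical

/-- Let `s ≥ t ≥ 2`, `Γ` strongly regular with parameters
`((s+1)(st+1), s(t+1), s−1, t+1)` and `v` a regular point. Any two adjacent vertices
`x, y`, both distinct from `v` and not adjacent to `v`, have exactly one common neighbour
in `N(v)`; equivalently, exactly `s − 2` common neighbours among the vertices distinct
from `v` and not adjacent to `v`. -/
theorem adjacent_in_second_subconstituent_common_neighbors {V : Type} [Fintype V]
    (s t : ℕ) (hts : t ≤ s) (ht : 2 ≤ t) (G : SimpleGraph V)
    (hG : G.IsSRGWith ((s + 1) * (s * t + 1)) (s * (t + 1)) (s - 1) (t + 1))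
    (v : V) (hreg : IsRegularPoint G t v)
    (x y : V) (hxv : x ≠ v) (hyv : y ≠ v) (hxa : ¬ G.Adj v x) (hya : ¬ G.Adj v y)
    (hxy : G.Adj x y) :
    (G.neighborSet x ∩ G.neighborSet y ∩ G.neighborSet v).ncard = 1 ∧
    (G.neighborSet x ∩ G.neighborSet y ∩ {z : V | z ≠ v ∧ ¬ G.Adj v z}).ncard = s - 2 := by
  have hdeg : ∀ p, (Finset.univ.filter (fun u => G.Adj p u)).card = s * (t + 1) := by
    intro p
    rw [← hG.regular p, ← SimpleGraph.card_neighborFinset_eq_degree]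
    congr 1; ext u; simp
  have hadj : ∀ p q, G.Adj p q →
      (Finset.univ.filter (fun u => G.Adj p u ∧ G.Adj q u)).card = s - 1 := by
    intro p q h
    rw [← hG.of_adj p q h, ← Set.toFinset_card]
    congr 1; ext u; simp [SimpleGraph.mem_commonNeighbors]
  have hnadj : ∀ p q, p ≠ q → ¬ G.Adj p q →
      (Finset.univ.filter (fun u => G.Adj p u ∧ G.Adj q u)).card = t + 1 := by
    intro p q hpq h
    rw [← hG.of_not_adj hpq h, ← Set.toFinset_card]
    congr 1; ext u; simp [SimpleGraph.mem_commonNeighbors]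
  obtain ⟨heq, hspan⟩ := hreg
  -- common neighbours of `v` and `x` form a coclique
  have hco : ∀ z w, G.Adj v z → G.Adj v w → G.Adj x z → G.Adj x w → ¬ G.Adj z w := by
    intro z w hvz hvw hxz hxw hzw
    have hsub : insert x (insert v
        ((Finset.univ.filter (fun u => G.Adj v u ∧ G.Adj z u)).erase w)) ⊆
        Finset.univ.filter (fun u => G.Adj z u ∧ G.Adj w u) := by
      intro u hu
      simp only [Finset.mem_insert, Finset.mem_erase, Finset.mem_filter, Finset.mem_univ,
        true_and] at hu ⊢
      rcases hu with rfl | rfl | ⟨huw, hvu, hzu⟩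
      · exact ⟨hxz.symm, hxw.symm⟩
      · exact ⟨hvz.symm, hvw.symm⟩
      · refine ⟨hzu, ?_⟩
        have := heq.trans (x := ⟨w, hvw⟩) (y := ⟨z, hvz⟩) (z := ⟨u, hvu⟩)
          (Or.inr hzw.symm) (Or.inr hzu)
        rcases this with h | h
        · exact absurd (congrArg Subtype.val h).symm huw
        · exact h
    have hc := Finset.card_le_card hsub
    rw [hadj z w hzw, Finset.card_insert_of_notMem, Finset.card_insert_of_notMem,
      Finset.card_erase_of_mem, hadj v z hvz] at hc
    · omega
    · simp [hvw, hzw]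
    · simp
    · simp [hxv, hxa]
  have hle : ∀ y', G.Adj x y' → ¬ G.Adj v y' →
      (Finset.univ.filter (fun u => (G.Adj v u ∧ G.Adj x u) ∧ G.Adj y' u)).card ≤ 1 := by
    intro y' hxy' hvy'
    rw [Finset.card_le_one]
    intro z hz w hw
    simp only [Finset.mem_filter, Finset.mem_univ, true_and] at hz hw
    obtain ⟨⟨hvz, hxz⟩, hyz⟩ := hz
    obtain ⟨⟨hvw, hxw⟩, hyw⟩ := hw
    by_contra hne
    obtain ⟨hcard, hcoc⟩ := hspan x hxv hxa
    have hxH : x ∈ perp G (perp G {v, x}) := by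
      intro m hm
      rcases hm x (by simp) with h | h
      · exact Or.inl h.symm
      · exact Or.inr h.symm
    have hM : ∀ m, G.Adj v m → G.Adj x m → m ∈ perp G {v, x} := by
      intro m h1 h2 p hp
      rcases hp with rfl | hp
      · exact Or.inr h1.symm
      · rw [Set.mem_singleton_iff] at hp; subst hp; exact Or.inr h2.symm
    have hH : ∀ m, G.Adj v m → G.Adj x m → ∀ h ∈ perp G (perp G {v, x}), G.Adj m h := by
      intro m h1 h2 h hh
      rcases hh m (hM m h1 h2) with h3 | h3
      · subst h3; exact absurd h2 (hcoc _ hxH _ hh)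
      · exact h3.symm
    have hE : perp G (perp G {v, x}) =
        ((Finset.univ.filter (fun u => G.Adj z u ∧ G.Adj w u) : Finset V) : Set V) := by
      apply Set.eq_of_subset_of_ncard_le
      · intro h hh
        simpa using ⟨hH z hvz hxz h hh, hH w hvw hxw h hh⟩
      · rw [Set.ncard_coe_finset, hcard, hnadj z w hne (hco z w hvz hvw hxz hxw)]
      · exact Set.toFinite _
    have hy' : y' ∈ perp G (perp G {v, x}) := by
      rw [hE]; simpa using ⟨hyz.symm, hyw.symm⟩
    exact hcoc _ hxH _ hy' hxy'
  set M := Finset.univ.filter (fun u => G.Adj v u ∧ G.Adj x u) with hMdef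
  set N := Finset.univ.filter (fun u => G.Adj x u ∧ ¬ G.Adj v u) with hNdef
  have hMc : M.card = t + 1 := hnadj v x hxv.symm hxa
  have hNc : N.card + (t + 1) = s * (t + 1) := by
    rw [← hdeg x, ← hMc, ← Finset.card_filter_add_card_filter_not (s := Finset.univ.filter (fun u => G.Adj x u)) (fun u => G.Adj v u),
      Finset.filter_filter, Finset.filter_filter, add_comm]
    congr 2
    ext u; simp [hMdef, and_comm]
  have hsum : ∑ y' ∈ N, (M.filter (fun u => G.Adj y' u)).card = (t + 1) * (s - 1) := by
    have h := Finset.sum_card_bipartiteAbove_eq_sum_card_bipartiteBelow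
      (s := N) (t := M) (fun a b => G.Adj a b)
    unfold Finset.bipartiteAbove Finset.bipartiteBelow at h
    rw [h, ← hMc, ← smul_eq_mul, ← Finset.sum_const]
    apply Finset.sum_congr rfl
    intro z hz
    simp only [hMdef, Finset.mem_filter, Finset.mem_univ, true_and] at hz
    rw [← hadj x z hz.2]
    congr 1
    ext u
    simp only [hNdef, Finset.mem_filter, Finset.mem_univ, true_and]
    constructor
    · rintro ⟨⟨h1, h2⟩, h3⟩; exact ⟨h1, h3.symm⟩
    · rintro ⟨h1, h2⟩; exact ⟨⟨h1, fun h => hco z u hz.1 h hz.2 h1 h2⟩, h2.symm⟩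
  have hle' : ∀ y' ∈ N, (M.filter (fun u => G.Adj y' u)).card ≤ 1 := by
    intro y' hy'
    simp only [hNdef, Finset.mem_filter, Finset.mem_univ, true_and] at hy'
    have := hle y' hy'.1 hy'.2
    rwa [hMdef, Finset.filter_filter]
  have hone : ∀ y' ∈ N, (M.filter (fun u => G.Adj y' u)).card = 1 := by
    apply (Finset.sum_eq_sum_iff_of_le hle').1
    rw [hsum, Finset.sum_const, smul_eq_mul, mul_one]
    obtain ⟨r, rfl⟩ : ∃ r, s = r + 1 := ⟨s - 1, by omega⟩
    simp only [Nat.add_sub_cancel]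
    nlinarith
  have h1 := hone y (by simp [hNdef, hxy, hya])
  have hfst : (G.neighborSet x ∩ G.neighborSet y ∩ G.neighborSet v).ncard = 1 := by
    rw [← h1, ← Set.ncard_coe_finset]
    congr 1; ext u; simp [hMdef]; tauto
  refine ⟨hfst, ?_⟩
  have hu : (G.neighborSet x ∩ G.neighborSet y ∩ G.neighborSet v).ncard +
      (G.neighborSet x ∩ G.neighborSet y ∩ {z : V | z ≠ v ∧ ¬ G.Adj v z}).ncard = s - 1 := by
    rw [← Set.ncard_union_eq, ← hadj x y hxy, ← Set.ncard_coe_finset]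
    · congr 1; ext u
      simp only [Set.mem_union, Set.mem_inter_iff, SimpleGraph.mem_neighborSet,
        Set.mem_setOf_eq, Finset.coe_filter, Finset.mem_univ, true_and]
      constructor
      · tauto
      · rintro ⟨a, b⟩
        have : u ≠ v := by rintro rfl; exact hxa a.symm
        tauto
    · rw [Set.disjoint_left]
      rintro u ⟨_, h⟩ ⟨_, h'⟩
      exact h'.2 h
  omega
end

section
/- (Godsil–McKay switching.) Let Γ be a finite simple graph and let {D, C₁, …, C_m} be a partition of its vertex set such that: for all i, j and all x, y ∈ C_i, x and y have the same number of neighbours in C_j; and for every d ∈ D and every i, the number of neighbours of d in C_i is 0, |C_i|/2, or |C_i|. Let Γ' be the graph obtained from Γ by, for every d ∈ D and every i with |N(d) ∩ C_i| = |C_i|/2, replacing the edges from d to C_i by the edges from d to the other |C_i|/2 vertices of C_i (all other adjacencies unchanged). Then the adjacency matrices of Γ and Γ' (over ℚ) have the same characteristic polynomial. -/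
open scoped Classical

theorem gm_aux {V : Type} [Fintype V] (A B : Matrix V V ℚ) (K : V → Finset V) (D : Set V)
    (hA : ∀ x y, A x y = A y x) (hB : ∀ x y, B x y = B y x)
    (hK1 : ∀ x y, y ∈ K x → K y = K x)
    (hK2 : ∀ x, x ∉ D → x ∈ K x)
    (hK3 : ∀ x, x ∈ D → K x = ∅)
    (hDD : ∀ x ∈ D, ∀ y ∈ D, B x y = A x y)
    (hCC : ∀ x ∉ D, ∀ y ∉ D, B x y = A x y)
    (hE : ∀ x ∉ D, ∀ y ∉ D, ∀ z ∈ K x, ∑ w ∈ K y, A z w = ∑ w ∈ K y, A x w)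
    (hS : ∀ x ∈ D, ∀ y ∉ D, 2 * ∑ z ∈ K y, B x z = (K y).card * (A x y + B x y)) 
    (hS' : ∀ x ∈ D, ∀ y ∉ D, 2 * ∑ z ∈ K y, A x z = (K y).card * (A x y + B x y)) :
    A.charpoly = B.charpoly := by
  have hc : ∀ x, x ∉ D → ((K x).card : ℚ) ≠ 0 := fun x hx => by
    have := Finset.card_pos.2 ⟨x, hK2 x hx⟩
    positivity
  have hself : ∀ x y, y ∈ K x → x ∈ K y := by
    intro x y h
    by_cases hx : x ∈ D
    · simp [hK3 x hx] at h
    · rw [hK1 x y h]; exact hK2 x hx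
  let s : V → ℚ := fun x => if x ∈ D then 1 else -1
  let Q : Matrix V V ℚ := fun x y => (if y ∈ K x then 2 / ((K x).card : ℚ) else 0)
    + (if x = y then s x else 0)
  have hrow : ∀ (M : Matrix V V ℚ) x y,
      (Q * M) x y = 2 / ((K x).card : ℚ) * ∑ z ∈ K x, M z y + s x * M x y := by
    intro M x y
    rw [Matrix.mul_apply]
    simp only [Q, add_mul, Finset.sum_add_distrib, ite_mul, zero_mul]
    simp [Finset.mul_sum]
  have hcol : ∀ (M : Matrix V V ℚ) x y,
      (M * Q) x y = 2 / ((K y).card : ℚ) * ∑ z ∈ K y, M x z + s y * M x y := by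
    intro M x y
    have hQ : ∀ z, Q z y = (if z ∈ K y then 2 / ((K y).card : ℚ) else 0)
        + (if y = z then s y else 0) := by
      intro z
      have h1 : y ∈ K z ↔ z ∈ K y := ⟨hself _ _, hself _ _⟩
      simp only [Q, h1]
      congr 1
      · split_ifs with h
        · rw [hK1 _ _ h]
        · rfl
      · by_cases h : z = y
        · simp [h]
        · simp [h, Ne.symm h]
    simp only [Matrix.mul_apply, hQ, mul_add, Finset.sum_add_distrib, mul_ite, mul_zero]
    simp [← Finset.sum_mul, mul_comm]
  have hQQ : Q * Q = 1 := by
    ext x y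
    rw [hrow]
    by_cases hx : x ∈ D
    · simp [hK3 x hx, Q, s, hx, Matrix.one_apply]
    · have hz : ∀ z ∈ K x, Q z y = (if y ∈ K x then 2 / ((K x).card : ℚ) else 0)
          + (if z = y then -1 else 0) := by
        intro z hz
        have hzD : z ∉ D := fun h => by
          have := hself _ _ hz
          simp [hK3 z h] at this
        simp only [Q, hK1 x z hz, s, hzD, if_false]
      rw [Finset.sum_congr rfl hz, Finset.sum_add_distrib]
      have := hc x hx
      by_cases hy : y ∈ K x
      · simp [hy, Q, s, hx, Matrix.one_apply]
        split_ifs <;> field_simp <;> ring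
      · have hxy : x ≠ y := fun h => hy (h ▸ hK2 x hx)
        simp [hy, Q, s, hx, Matrix.one_apply, hxy]
  have hQA : Q * A = B * Q := by
    ext x y
    rw [hrow, hcol]
    by_cases hx : x ∈ D <;> by_cases hy : y ∈ D
    · simp [hK3 x hx, hK3 y hy, s, hx, hy, hDD x hx y hy]
    · simp only [hK3 x hx, s, hx, hy, if_true, if_false]
      have h1 := hS x hx y hy
      have h2 := hc y hy
      simp only [Finset.sum_empty, mul_zero, zero_add]
      field_simp
      linarith
    · simp only [hK3 y hy, s, hx, hy, if_true, if_false]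
      have h1 := hS' y hy x hx
      have h2 := hc x hx
      simp only [Finset.sum_empty, mul_zero, zero_add, hA _ y, hB _ y]
      field_simp
      linarith
    · simp only [s, hx, hy, if_false, hCC x hx y hy]
      have hz : ∀ z ∈ K y, B x z = A x z := by
        intro z hz
        refine hCC x hx z fun h => ?_
        have := hself _ _ hz
        simp [hK3 z h] at this
      rw [Finset.sum_congr rfl hz]
      have e1 : ∑ z ∈ K x, ∑ w ∈ K y, A z w = (K x).card * ∑ w ∈ K y, A x w := by
        rw [Finset.sum_congr rfl (hE x hx y hy)]; simp
      have e2 : ∑ w ∈ K y, ∑ z ∈ K x, A z w = (K y).card * ∑ z ∈ K x, A z y := by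
        have : ∀ w ∈ K y, ∑ z ∈ K x, A z w = ∑ z ∈ K x, A z y := by
          intro w hw
          simp only [hA _ w, hA _ y]
          exact hE y hy x hx w hw
        rw [Finset.sum_congr rfl this]; simp
      have e3 := (e1.symm.trans Finset.sum_comm).trans e2
      have h1 := hc x hx
      have h2 := hc y hy
      field_simp
      linarith
  have : A = Q * (B * Q) := by
    rw [← hQA, ← mul_assoc, hQQ, one_mul]
  rw [this, Matrix.charpoly_mul_comm, mul_assoc, hQQ, mul_one]

/-- Godsil–McKay switching. Let `Γ` (= `G`) be a finite graph with a
partition `{D, C₁, …, C_m}` of its vertex set such that `{C₁, …, C_m}` is equitable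
(any two vertices of `C i` have the same number of neighbours in each `C j`) and every
`d ∈ D` has `0`, `|C i|/2` or `|C i|` neighbours in each `C i`. If `Γ'` (= `G'`) is
obtained by switching the edges between each `d ∈ D` and each `C i` containing exactly
half of the neighbours of `d` (all other adjacencies unchanged), then `Γ` and `Γ'` have
the same characteristic polynomial. -/
theorem godsil_mckay_switching {V : Type} [Fintype V]
    (G G' : SimpleGraph V) (m : ℕ) (D : Set V) (C : Fin m → Set V)
    (hcover : D ∪ (⋃ i, C i) = Set.univ)
    (hDC : ∀ i, Disjoint D (C i))
    (hCC : ∀ i j, i ≠ j → Disjoint (C i) (C j))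
    (hequit : ∀ i j, ∀ x ∈ C i, ∀ y ∈ C i,
      (G.neighborSet x ∩ C j).ncard = (G.neighborSet y ∩ C j).ncard)
    (hD : ∀ d ∈ D, ∀ i,
      (G.neighborSet d ∩ C i).ncard = 0 ∨
      2 * (G.neighborSet d ∩ C i).ncard = (C i).ncard ∨
      (G.neighborSet d ∩ C i).ncard = (C i).ncard)
    (hswitch : ∀ d ∈ D, ∀ i, ∀ y ∈ C i,
      (2 * (G.neighborSet d ∩ C i).ncard = (C i).ncard →
        (G'.Adj d y ↔ ¬ G.Adj d y)) ∧
      (¬ 2 * (G.neighborSet d ∩ C i).ncard = (C i).ncard →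
        (G'.Adj d y ↔ G.Adj d y)))
    (hDD : ∀ d ∈ D, ∀ e ∈ D, (G'.Adj d e ↔ G.Adj d e))
    (hCCadj : ∀ i j, ∀ x ∈ C i, ∀ y ∈ C j, (G'.Adj x y ↔ G.Adj x y)) :
    Matrix.charpoly (G.adjMatrix ℚ) = Matrix.charpoly (G'.adjMatrix ℚ) := by
  have hnD : ∀ x, x ∉ D → ∃ i, x ∈ C i := by
    intro x hx
    have : x ∈ D ∪ (⋃ i, C i) := hcover ▸ Set.mem_univ x
    simpa [hx] using this
  have hDn : ∀ x i, x ∈ C i → x ∉ D := fun x i h h' => Set.disjoint_left.1 (hDC i) h' h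
  have huniq : ∀ x i j, x ∈ C i → x ∈ C j → i = j := by
    intro x i j hi hj
    by_contra h
    exact Set.disjoint_left.1 (hCC i j h) hi hj
  let K : V → Finset V := fun x => Finset.univ.filter fun y => ∃ i, x ∈ C i ∧ y ∈ C i
  have hK : ∀ x i, x ∈ C i → K x = Finset.univ.filter (fun y => y ∈ C i) := by
    intro x i hx
    ext y
    simp only [K, Finset.mem_filter, Finset.mem_univ, true_and]
    constructor
    · rintro ⟨j, hj, hy⟩
      rwa [huniq x i j hx hj]
    · exact fun hy => ⟨i, hx, hy⟩
  have hKc : ∀ x i, x ∈ C i → (C i).ncard = (K x).card := by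
    intro x i hx
    rw [hK x i hx, ← Set.ncard_coe_finset]
    congr 1; ext; simp
  have hsum : ∀ z x i, x ∈ C i →
      ∑ w ∈ K x, G.adjMatrix ℚ z w = ((G.neighborSet z ∩ C i).ncard : ℚ) := by
    intro z x i hx
    have : (G.neighborSet z ∩ C i) = ((K x).filter (fun w => G.Adj z w) : Finset V) := by
      ext w; simp [hK x i hx, and_comm]
    rw [this, Set.ncard_coe_finset]
    simp [SimpleGraph.adjMatrix_apply]
  have hSS : ∀ x ∈ D, ∀ y ∉ D,
      2 * ∑ z ∈ K y, G'.adjMatrix ℚ x z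
        = (K y).card * (G.adjMatrix ℚ x y + G'.adjMatrix ℚ x y) ∧
      2 * ∑ z ∈ K y, G.adjMatrix ℚ x z
        = (K y).card * (G.adjMatrix ℚ x y + G'.adjMatrix ℚ x y) := by
    intro x hx y hy
    obtain ⟨i, hi⟩ := hnD y hy
    have hmem : ∀ z, z ∈ K y ↔ z ∈ C i := by intro z; simp [hK y i hi]
    by_cases hh : 2 * (G.neighborSet x ∩ C i).ncard = (C i).ncard
    · have hB : ∀ z ∈ K y, G'.adjMatrix ℚ x z = 1 - G.adjMatrix ℚ x z := by
        intro z hz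
        have := (hswitch x hx i z ((hmem z).1 hz)).1 hh
        simp only [SimpleGraph.adjMatrix_apply, this]
        split_ifs <;> simp_all
      have h2 : 2 * ∑ z ∈ K y, G.adjMatrix ℚ x z = (K y).card := by
        rw [hsum x y i hi, ← hKc y i hi]; exact_mod_cast hh
      rw [Finset.sum_congr rfl hB, hB y ((hmem y).2 hi), Finset.sum_sub_distrib]
      simp only [Finset.sum_const, nsmul_eq_mul, mul_one]
      constructor <;> linarith
    · have hB : ∀ z ∈ K y, G'.adjMatrix ℚ x z = G.adjMatrix ℚ x z := by
        intro z hz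
        have := (hswitch x hx i z ((hmem z).1 hz)).2 hh
        simp only [SimpleGraph.adjMatrix_apply, this]
      rw [Finset.sum_congr rfl hB, hB y ((hmem y).2 hi), hsum x y i hi, ← hKc y i hi, and_self]
      rcases hD x hx i with h | h | h
      · have : ¬ G.Adj x y := by
          rw [Set.ncard_eq_zero] at h
          intro hxy
          have : y ∈ G.neighborSet x ∩ C i := ⟨hxy, hi⟩
          simp [h] at this
        simp [h, SimpleGraph.adjMatrix_apply, this]
      · exact absurd h hh
      · have : G.Adj x y := by
          have e := Set.eq_of_subset_of_ncard_le (Set.inter_subset_right) h.ge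
          have : y ∈ G.neighborSet x ∩ C i := e.symm.subset hi
          exact this.1
        simp [h, SimpleGraph.adjMatrix_apply, this]
        ring
  refine gm_aux _ _ K D ?_ ?_ ?_ ?_ ?_ ?_ ?_ ?_ (fun x hx y hy => (hSS x hx y hy).1)
    (fun x hx y hy => (hSS x hx y hy).2)
  · intro x y; simp [SimpleGraph.adjMatrix_apply, SimpleGraph.adj_comm]
  · intro x y; simp [SimpleGraph.adjMatrix_apply, SimpleGraph.adj_comm]
  · intro x y h
    simp only [K, Finset.mem_filter, Finset.mem_univ, true_and] at h
    obtain ⟨i, hx, hy⟩ := h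
    rw [hK x i hx, hK y i hy]
  · intro x hx
    obtain ⟨i, hi⟩ := hnD x hx
    simp [hK x i hi, hi]
  · intro x hx
    ext y
    simp only [K, Finset.mem_filter, Finset.mem_univ, true_and, Finset.notMem_empty, iff_false]
    rintro ⟨i, hi, -⟩
    exact hDn x i hi hx
  · intro x hx y hy
    simp only [SimpleGraph.adjMatrix_apply, hDD x hx y hy]
  · intro x hx y hy
    obtain ⟨i, hi⟩ := hnD x hx
    obtain ⟨j, hj⟩ := hnD y hy
    simp only [SimpleGraph.adjMatrix_apply, hCCadj i j x hi y hj]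
  · intro x hx y hy z hz
    obtain ⟨i, hi⟩ := hnD x hx
    obtain ⟨j, hj⟩ := hnD y hy
    have hz' : z ∈ C i := by simpa [hK x i hi] using hz
    rw [hsum z y j hj, hsum x y j hj, hequit i j z hz' x hi]
end

section
/- Let q ≥ 2. Let H be a distance-regular graph with intersection array {q²−1, q²−q, 1; 1, q, q²−1} such that the relation x ≈ y ⟺ (x = y or dist_H(x,y) = 3) is an equivalence relation on the vertices of H whose classes (fibres) each have exactly q elements. Let P be the set of fibres, and let 𝓛 be a family of subsets of P such that |P| = q², every member of 𝓛 has exactly q elements, and any two distinct elements of P lie in exactly one common member of 𝓛 (so that (P, 𝓛) is an affine plane of order q). Define a graph Γ on the disjoint union {v} ⊔ 𝓛 ⊔ V(H) by: v is adjacent to every element of 𝓛; two distinct elements ℓ, m of 𝓛 are adjacent iff ℓ ∩ m = ∅; ℓ ∈ 𝓛 is adjacent to x ∈ V(H) iff the fibre of x belongs to ℓ; and two vertices of V(H) are adjacent iff they are adjacent in H. Then Γ is a strongly regular graph with parameters (q³+q²+q+1, q²+q, q−1, q+1). -/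
open scoped Classical

/-- `H` is a connected distance-regular graph of diameter 3 with intersection array
`{b₀, b₁, b₂; c₁, c₂, c₃}`. -/
def IsDRG3 {V : Type*} (H : SimpleGraph V) (b0 b1 b2 c1 c2 c3 : ℕ) : Prop :=
  H.Connected ∧ (∀ u w : V, H.dist u w ≤ 3) ∧ (∃ u w : V, H.dist u w = 3) ∧
  (∀ x : V, (H.neighborSet x).ncard = b0) ∧
  (∀ u w : V, H.dist u w = 1 →
    {y | H.Adj w y ∧ H.dist u y = 0}.ncard = c1 ∧
    {y | H.Adj w y ∧ H.dist u y = 2}.ncard = b1) ∧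
  (∀ u w : V, H.dist u w = 2 →
    {y | H.Adj w y ∧ H.dist u y = 1}.ncard = c2 ∧
    {y | H.Adj w y ∧ H.dist u y = 3}.ncard = b2) ∧
  (∀ u w : V, H.dist u w = 3 →
    {y | H.Adj w y ∧ H.dist u y = 2}.ncard = c3 ∧
    {y | H.Adj w y ∧ H.dist u y = 4}.ncard = 0)

/-- The fibre of a vertex `x`: the set of vertices equal to `x` or at distance 3 from it. -/
def fibre {V : Type*} (H : SimpleGraph V) (x : V) : Set V :=
  {y | x = y ∨ H.dist x y = 3}

/-- The relation defining the graph `Γ` on `{v} ⊔ 𝓛 ⊔ V(H)`: `v` is adjacent to every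
line; two distinct lines are adjacent iff they are disjoint (parallel); a line `ℓ` is
adjacent to `x ∈ V(H)` iff the fibre of `x` belongs to `ℓ`; and vertices of `H` are
adjacent as in `H`. -/
def gammaRel {V : Type*} (H : SimpleGraph V) (L : Set (Set (Set V))) :
    (Unit ⊕ ↥L ⊕ V) → (Unit ⊕ ↥L ⊕ V) → Prop
  | Sum.inl _, Sum.inr (Sum.inl _) => True
  | Sum.inr (Sum.inl l), Sum.inr (Sum.inl l') =>
      (l : Set (Set V)) ∩ (l' : Set (Set V)) = ∅
  | Sum.inr (Sum.inl l), Sum.inr (Sum.inr x) => fibre H x ∈ (l : Set (Set V))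
  | Sum.inr (Sum.inr x), Sum.inr (Sum.inr y) => H.Adj x y
  | _, _ => False

noncomputable instance {V : Type*} [Finite V] (L : Set (Set (Set V))) :
    Fintype (Unit ⊕ ↥L ⊕ V) :=
  Fintype.ofFinite _


section plane
open Finset

structure Pl {P Λ : Type} [Fintype P] [Fintype Λ] (I : P → Λ → Prop) (q : ℕ) : Prop where
  hq : 2 ≤ q
  hP : Fintype.card P = q ^ 2
  hl : ∀ l, #{p | I p l} = q
  hu : ∀ p p', p ≠ p' → #{l | I p l ∧ I p' l} = 1

def Par {P Λ : Type} (I : P → Λ → Prop) (l m : Λ) : Prop := ∀ p, I p l → ¬ I p m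

theorem Par.symm {P Λ : Type} {I : P → Λ → Prop} {l m : Λ} (h : Par I l m) : Par I m l :=
  fun p h1 h2 => h p h2 h1

variable {P Λ : Type} [Fintype P] [Fintype Λ] {I : P → Λ → Prop} {q : ℕ}

theorem Pl.meet (h : Pl I q) {l m : Λ} {p p' : P} (hlm : l ≠ m) (h1 : I p l) (h2 : I p m)
    (h3 : I p' l) (h4 : I p' m) : p = p' := by
  by_contra hne
  have := h.hu p p' hne
  rw [card_eq_one] at this
  obtain ⟨a, ha⟩ := this
  have e1 : l ∈ ({l | I p l ∧ I p' l} : Finset Λ) := mem_filter.2 ⟨mem_univ _, h1, h3⟩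
  have e2 : m ∈ ({l | I p l ∧ I p' l} : Finset Λ) := mem_filter.2 ⟨mem_univ _, h2, h4⟩
  rw [ha, mem_singleton] at e1 e2
  exact hlm (e1.trans e2.symm)

theorem Pl.meet_card (h : Pl I q) {l m : Λ} (hlm : l ≠ m) (hp : ¬ Par I l m) :
    #{p | I p l ∧ I p m} = 1 := by
  simp only [Par, not_forall, not_not] at hp
  obtain ⟨p, h1, h2⟩ := hp
  rw [card_eq_one]
  refine ⟨p, ?_⟩
  ext p'
  simp only [mem_filter, mem_univ, true_and, mem_singleton]
  constructor
  · rintro ⟨h3, h4⟩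
    exact h.meet hlm h3 h4 h1 h2
  · rintro rfl; exact ⟨h1, h2⟩

theorem Pl.irrefl (h : Pl I q) (l : Λ) : ¬ Par I l l := by
  intro hp
  have h1 := h.hl l
  have h2 := h.hq
  have : 0 < #{p | I p l} := by omega
  obtain ⟨p, hp'⟩ := card_pos.1 this
  simp at hp'
  exact hp p hp' hp'

theorem Pl.del (h : Pl I q) {p : P} {l : Λ} (hp : I p l) : #{p' | p' ≠ p ∧ I p' l} = q - 1 := by
  have : ({p' | p' ≠ p ∧ I p' l} : Finset P) = ({p' | I p' l} : Finset P).erase p := by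
    ext; simp
  rw [this, card_erase_of_mem (by simpa), h.hl]

theorem Pl.thru (h : Pl I q) (p : P) : #{l | I p l} = q + 1 := by
  have := card_mul_eq_card_mul (s := ({p' | p' ≠ p} : Finset P)) (t := ({l | I p l} : Finset Λ))
    (fun p' l => I p' l) (m := 1) (n := q - 1) ?_ ?_
  · have e : #({p' | p' ≠ p} : Finset P) = q ^ 2 - 1 := by
      rw [filter_ne', card_erase_of_mem (mem_univ _), card_univ, h.hP]
    rw [e] at this
    have hq := h.hq
    obtain ⟨k, rfl⟩ : ∃ k, q = k + 1 := ⟨q - 1, by omega⟩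
    have e2 : (k + 1) ^ 2 - 1 = (k + 2) * k := by
      have : (k + 1) ^ 2 = (k + 2) * k + 1 := by ring
      omega
    rw [e2] at this
    simp at this
    omega
  · intro a ha
    simp only [mem_filter, mem_univ, true_and] at ha
    rw [bipartiteAbove, filter_filter]
    exact h.hu p a (Ne.symm ha)
  · intro l hl
    simp only [mem_filter, mem_univ, true_and] at hl
    rw [bipartiteBelow, filter_filter]
    exact h.del hl

theorem Pl.lines (h : Pl I q) : Fintype.card Λ = q ^ 2 + q := by
  have := card_mul_eq_card_mul (s := (univ : Finset P)) (t := (univ : Finset Λ))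
    (fun p' l => I p' l) (m := q + 1) (n := q) (fun a _ => h.thru a) (fun l _ => h.hl l)
  rw [card_univ, card_univ, h.hP] at this
  have hq := h.hq
  apply Nat.eq_of_mul_eq_mul_right (show 0 < q by omega)
  rw [← this]; ring

theorem Pl.playfair (h : Pl I q) {p : P} {l : Λ} (hp : ¬ I p l) :
    #{m | I p m ∧ Par I l m} = 1 := by
  have := card_mul_eq_card_mul (s := ({p' | I p' l} : Finset P))
    (t := ({m | I p m ∧ ¬ Par I l m} : Finset Λ))
    (fun p' l => I p' l) (m := 1) (n := 1) ?_ ?_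
  · rw [h.hl] at this
    have h2 := card_filter_add_card_filter_not (s := ({m | I p m} : Finset Λ)) (fun m => Par I l m)
    rw [filter_filter, filter_filter, h.thru] at h2
    omega
  · intro a ha
    simp only [mem_filter, mem_univ, true_and] at ha
    rw [bipartiteAbove, filter_filter]
    rw [← h.hu p a (by rintro rfl; exact hp ha)]
    congr 1
    ext m
    simp only [mem_filter, mem_univ, true_and, Par]
    grind
  · intro m hm
    simp only [mem_filter, mem_univ, true_and] at hm
    rw [bipartiteBelow, filter_filter]
    exact h.meet_card (by rintro rfl; exact hp hm.1) hm.2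

theorem Pl.par_unique (h : Pl I q) {l m n : Λ} {p : P} (h1 : Par I l m) (h2 : Par I l n)
    (hm : I p m) (hn : I p n) : m = n := by
  have hp : ¬ I p l := fun hl => h1 p hl hm
  have := h.playfair hp
  rw [card_eq_one] at this
  obtain ⟨a, ha⟩ := this
  have e1 : m ∈ ({m | I p m ∧ Par I l m} : Finset Λ) := mem_filter.2 ⟨mem_univ _, hm, h1⟩
  have e2 : n ∈ ({m | I p m ∧ Par I l m} : Finset Λ) := mem_filter.2 ⟨mem_univ _, hn, h2⟩
  rw [ha, mem_singleton] at e1 e2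
  exact e1.trans e2.symm

theorem Pl.par_card (h : Pl I q) (l : Λ) : #{m | Par I l m} = q - 1 := by
  have := card_mul_eq_card_mul (s := ({p' | ¬ I p' l} : Finset P))
    (t := ({m | Par I l m} : Finset Λ))
    (fun p' l => I p' l) (m := 1) (n := q) ?_ ?_
  · have h2 := card_filter_add_card_filter_not (s := (univ : Finset P)) (fun p => I p l)
    rw [h.hl, card_univ, h.hP] at h2
    have hq := h.hq
    apply Nat.eq_of_mul_eq_mul_right (show 0 < q by omega)
    rw [← this, Nat.sub_mul, ← pow_two]
    omega
  · intro p hp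
    simp only [mem_filter, mem_univ, true_and] at hp
    rw [bipartiteAbove, filter_filter, ← h.playfair hp]
    simp only [and_comm]
  · intro m hm
    simp only [mem_filter, mem_univ, true_and] at hm
    rw [bipartiteBelow, filter_filter, ← h.hl m]
    congr 1
    ext p
    have := hm p
    simp
    tauto

theorem Pl.par_par (h : Pl I q) {l m : Λ} (hlm : Par I l m) :
    #{n | Par I l n ∧ Par I m n} = q - 2 := by
  have : ({n | Par I l n ∧ Par I m n} : Finset Λ) = ({n | Par I l n} : Finset Λ).erase m := by
    ext n
    simp only [mem_filter, mem_univ, true_and, mem_erase]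
    constructor
    · rintro ⟨h1, h2⟩
      exact ⟨by rintro rfl; exact h.irrefl _ h2, h1⟩
    · rintro ⟨h1, h2⟩
      refine ⟨h2, fun p h3 h4 => h1 (h.par_unique h2 hlm h4 h3)⟩
  rw [this, card_erase_of_mem (by simpa), h.par_card]
  omega

theorem Pl.not_par_par (h : Pl I q) {l m : Λ} (hne : l ≠ m) (hlm : ¬ Par I l m) :
    #{n | Par I l n ∧ Par I m n} = 0 := by
  rw [card_eq_zero, filter_eq_empty_iff]
  rintro n - ⟨h1, h2⟩
  apply hlm
  intro p h3 h4
  exact hne (h.par_unique h1.symm h2.symm h3 h4)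

structure Cov {V P : Type} [Fintype V] [Fintype P] (π : V → P) (A : V → V → Prop) (q : ℕ) : Prop where
  hq : 2 ≤ q
  hP : Fintype.card P = q ^ 2
  hfib : ∀ S, #{x | π x = S} = q
  symm : ∀ x y, A x y → A y x
  deg : ∀ x, #{y | A x y} = q ^ 2 - 1
  ne : ∀ x y, A x y → π x ≠ π y
  adj : ∀ x y, A x y → #{z | A x z ∧ A y z} = q - 2
  nadj : ∀ x y, ¬ A x y → π x ≠ π y → #{z | A x z ∧ A y z} = q
  same : ∀ x y, x ≠ y → π x = π y → #{z | A x z ∧ A y z} = 0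

variable {V : Type} [Fintype V] {π : V → P} {A : V → V → Prop}

theorem Cov.pull (h : Cov π A q) (Q : P → Prop) [DecidablePred Q]
    [DecidablePred fun x => Q (π x)] : #{x | Q (π x)} = q * #{S | Q S} := by
  have := card_mul_eq_card_mul (s := ({x | Q (π x)} : Finset V))
    (t := ({S | Q S} : Finset P))
    (fun x S => π x = S) (m := 1) (n := q) ?_ ?_
  · rw [mul_one] at this
    rw [this, mul_comm]
  · intro x hx
    simp only [mem_filter, mem_univ, true_and] at hx
    rw [bipartiteAbove, card_eq_one]
    refine ⟨π x, ?_⟩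
    ext; simp; grind
  · intro S hS
    simp only [mem_filter, mem_univ, true_and] at hS
    rw [bipartiteBelow, filter_filter, ← h.hfib S]
    congr 1
    ext; simp; grind

theorem Cov.inj (h : Cov π A q) (x : V) : Set.InjOn π {y | A x y} := by
  intro y hy z hz hyz
  by_contra hne
  have := h.same y z hne hyz
  rw [card_eq_zero, filter_eq_empty_iff] at this
  exact this (mem_univ x) ⟨h.symm _ _ hy, h.symm _ _ hz⟩

theorem Cov.image (h : Cov π A q) (x : V) :
    ({y | A x y} : Finset V).image π = ({S | S ≠ π x} : Finset P) := by
  apply eq_of_subset_of_card_le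
  · intro S
    simp only [mem_image, mem_filter, mem_univ, true_and]
    rintro ⟨y, h1, rfl⟩
    exact (h.ne _ _ h1).symm
  · rw [card_image_of_injOn (by simpa using h.inj x), h.deg, filter_ne',
      card_erase_of_mem (mem_univ _), card_univ, h.hP]

theorem Cov.nbr (h : Cov π A q) (x : V) (Q : P → Prop)
    [DecidablePred fun y => Q (π y) ∧ A x y] [DecidablePred fun S => S ≠ π x ∧ Q S] :
    #{y | Q (π y) ∧ A x y} = #{S | S ≠ π x ∧ Q S} := by
  rw [← card_image_of_injOn (f := π) (s := {y | Q (π y) ∧ A x y})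
    ((h.inj x).mono (by intro y; simp))]
  congr 1
  ext S
  have := h.image x
  rw [Finset.ext_iff] at this
  have := this S
  simp only [mem_image, mem_filter, mem_univ, true_and] at this ⊢
  rw [← this]
  grind

theorem Cov.card (h : Cov π A q) : Fintype.card V = q ^ 3 := by
  have := h.pull (fun _ => True)
  simp [h.hP] at this
  rw [this]; ring

end plane

section final
open Finset

theorem count_sum {Λ V : Type} [Fintype Λ] [Fintype V] (p : Unit ⊕ Λ ⊕ V → Prop) :
    Nat.card {z // p z} = (if p (Sum.inl ()) then 1 else 0) + (#{l | p (Sum.inr (Sum.inl l))} +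
      #{x | p (Sum.inr (Sum.inr x))}) := by
  let _ : Fintype (Unit ⊕ Λ ⊕ V) := instFintypeSum _ _
  rw [Nat.card_eq_fintype_card, Fintype.card_subtype, card_filter, Fintype.sum_sum_type,
    Fintype.sum_sum_type, card_filter, card_filter]
  simp only [Finset.univ_unique, Finset.sum_singleton]

theorem ncard_eq_filter {V : Type} [Fintype V] (p : V → Prop) [DecidablePred p] :
    {x | p x}.ncard = #{x | p x} := by
  rw [← Set.ncard_coe_finset]
  simp

def piMap {V : Type} (H : SimpleGraph V) (x : V) : {S : Set V // ∃ x, S = fibre H x} :=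
  ⟨fibre H x, x, rfl⟩

theorem piMap_eq {V : Type} {H : SimpleGraph V}
    (hEq : Equivalence (fun x y : V => x = y ∨ H.dist x y = 3)) (x y : V) :
    piMap H x = piMap H y ↔ (x = y ∨ H.dist x y = 3) := by
  simp only [piMap, Subtype.mk.injEq]
  constructor
  · intro h
    have : y ∈ fibre H y := Or.inl rfl
    rw [← h] at this
    exact this
  · intro h
    ext z
    exact ⟨fun h1 => hEq.trans (hEq.symm h) h1, fun h1 => hEq.trans h h1⟩

theorem cov {V : Type} [Fintype V] (q : ℕ) (hq : 2 ≤ q)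
    (H : SimpleGraph V)
    (hH : IsDRG3 H (q ^ 2 - 1) (q ^ 2 - q) 1 1 q (q ^ 2 - 1))
    (hEq : Equivalence (fun x y : V => x = y ∨ H.dist x y = 3))
    (hfib : ∀ x : V, (fibre H x).ncard = q)
    (hP : {S : Set V | ∃ x : V, S = fibre H x}.ncard = q ^ 2) : Cov (piMap H) H.Adj q := by
  obtain ⟨hc, h3, -, hdeg, hd1, hd2, hd3⟩ := hH
  have deg : ∀ x, #{y | H.Adj x y} = q ^ 2 - 1 := by
    intro x
    rw [← hdeg x, ← ncard_eq_filter]; rfl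
  have tri : ∀ x y z, H.Adj x z → H.Adj y z → H.dist x y ≤ 2 := by
    intro x y z h1 h2
    have := hc.dist_triangle (u := x) (v := z) (w := y)
    rw [SimpleGraph.dist_eq_one_iff_adj.2 h1, SimpleGraph.dist_eq_one_iff_adj.2 h2.symm] at this
    omega
  refine ⟨hq, ?_, ?_, fun _ _ h => h.symm, deg, ?_, ?_, ?_, ?_⟩
  · rw [← hP, ← Nat.card_eq_fintype_card]; rfl
  · rintro ⟨S, x, rfl⟩
    have := hfib x
    rw [← this, ← ncard_eq_filter]
    congr 1
    ext y
    show piMap H y = piMap H x ↔ _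
    rw [eq_comm, piMap_eq hEq]; rfl
  · intro x y h
    rw [Ne, piMap_eq hEq, SimpleGraph.dist_eq_one_iff_adj.2 h]
    simpa using h.ne
  · intro x y h
    have hd := SimpleGraph.dist_eq_one_iff_adj.2 h
    obtain ⟨e1, e2⟩ := hd1 x y hd
    rw [ncard_eq_filter] at e1 e2
    have e3 := deg y
    have key : ({z | H.Adj y z} : Finset V) = ({z | H.Adj y z ∧ H.dist x z = 0} : Finset V) ∪
        (({z | H.Adj x z ∧ H.Adj y z} : Finset V) ∪ ({z | H.Adj y z ∧ H.dist x z = 2} : Finset V)) := by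
      ext z
      simp only [mem_filter, mem_univ, true_and, mem_union, ← SimpleGraph.dist_eq_one_iff_adj (u := x)]
      constructor
      · intro hz
        have := tri x z y h hz.symm
        have : H.dist x z = 0 ∨ H.dist x z = 1 ∨ H.dist x z = 2 := by omega
        tauto
      · tauto
    rw [key, card_union_of_disjoint, card_union_of_disjoint, e1, e2] at e3
    · have : q ≤ q ^ 2 := Nat.le_self_pow (by omega) q
      omega
    · rw [Finset.disjoint_left]
      intro z
      simp only [mem_filter, mem_univ, true_and, ← SimpleGraph.dist_eq_one_iff_adj (u := x)]
      omega
    · rw [Finset.disjoint_left]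
      intro z
      simp only [mem_filter, mem_univ, true_and, mem_union, ← SimpleGraph.dist_eq_one_iff_adj (u := x)]
      omega
  · intro x y h1 h2
    rw [Ne, piMap_eq hEq, not_or] at h2
    have hd : H.dist x y = 2 := by
      have a0 : H.dist x y ≠ 0 := fun h => h2.1 (hc.dist_eq_zero_iff.1 h)
      have a1 : H.dist x y ≠ 1 := fun h => h1 (SimpleGraph.dist_eq_one_iff_adj.1 h)
      have := h3 x y
      omega
    rw [← (hd2 x y hd).1, ncard_eq_filter]
    simp only [SimpleGraph.dist_eq_one_iff_adj, and_comm]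
  · intro x y h1 h2
    rw [piMap_eq hEq] at h2
    rw [card_eq_zero, filter_eq_empty_iff]
    rintro z - ⟨h4, h5⟩
    have := tri x y z h4 h5
    rcases h2 with h2 | h2
    · exact h1 h2
    · omega

theorem plane {V : Type} [Fintype V] (q : ℕ) (hq : 2 ≤ q)
    (H : SimpleGraph V)
    (hP : {S : Set V | ∃ x : V, S = fibre H x}.ncard = q ^ 2)
    (L : Set (Set (Set V)))
    (hLsub : ∀ l ∈ L, ∀ S ∈ l, ∃ x : V, S = fibre H x)
    (hLcard : ∀ l ∈ L, l.ncard = q)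
    (hlines : ∀ S T : Set V, (∃ x : V, S = fibre H x) → (∃ x : V, T = fibre H x) →
      S ≠ T → ∃! l, l ∈ L ∧ S ∈ l ∧ T ∈ l) :
    Pl (fun (S : {S : Set V // ∃ x, S = fibre H x}) (l : L) => S.1 ∈ l.1) q := by
  refine ⟨hq, ?_, ?_, ?_⟩
  · rw [← hP, ← Nat.card_eq_fintype_card]; rfl
  · rintro ⟨l, hl⟩
    rw [← hLcard l hl, ← ncard_eq_filter, ← Set.ncard_image_of_injective _ Subtype.val_injective]
    congr 1
    ext S
    simp only [Set.mem_image, Set.mem_ofPred_eq, Subtype.exists, exists_and_left, exists_prop,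
      exists_eq_right_right]
    exact ⟨fun h => h.1, fun h => ⟨h, hLsub l hl S h⟩⟩
  · rintro ⟨S, hS⟩ ⟨T, hT⟩ hne
    obtain ⟨l, ⟨h1, h2, h3⟩, h4⟩ := hlines S T hS hT (by simpa using hne)
    rw [card_eq_one]
    refine ⟨⟨l, h1⟩, ?_⟩
    ext ⟨m, hm⟩
    simp only [mem_filter, mem_univ, true_and, mem_singleton, Subtype.mk.injEq]
    constructor
    · rintro ⟨h5, h6⟩
      exact h4 m ⟨hm, h5, h6⟩
    · rintro rfl; exact ⟨h2, h3⟩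

end final

theorem gamma_isSRGWith {V : Type} [Fintype V] (q : ℕ) (hq : 2 ≤ q)
    (H : SimpleGraph V)
    (hH : IsDRG3 H (q ^ 2 - 1) (q ^ 2 - q) 1 1 q (q ^ 2 - 1))
    (hEq : Equivalence (fun x y : V => x = y ∨ H.dist x y = 3))
    (hfib : ∀ x : V, (fibre H x).ncard = q)
    (hP : {S : Set V | ∃ x : V, S = fibre H x}.ncard = q ^ 2)
    (L : Set (Set (Set V)))
    (hLsub : ∀ l ∈ L, ∀ S ∈ l, ∃ x : V, S = fibre H x)
    (hLcard : ∀ l ∈ L, l.ncard = q)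
    (hlines : ∀ S T : Set V, (∃ x : V, S = fibre H x) → (∃ x : V, T = fibre H x) →
      S ≠ T → ∃! l, l ∈ L ∧ S ∈ l ∧ T ∈ l) :
    (SimpleGraph.fromRel (gammaRel H L)).IsSRGWith
      (q ^ 3 + q ^ 2 + q + 1) (q ^ 2 + q) (q - 1) (q + 1) := by
  have C := cov q hq H hH hEq hfib hP
  have B := plane q hq H hP L hLsub hLcard hlines
  set I : {S : Set V // ∃ x, S = fibre H x} → L → Prop := fun S l => S.1 ∈ l.1 with hI
  set π := piMap H with hπ
  set G := SimpleGraph.fromRel (gammaRel H L) with hG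
  have hpar : ∀ l m : L, Par I l m ↔ (l : Set (Set V)) ∩ (m : Set (Set V)) = ∅ := by
    intro l m
    rw [Set.eq_empty_iff_forall_notMem]
    constructor
    · rintro h S ⟨h1, h2⟩
      exact h ⟨S, hLsub l l.2 S h1⟩ h1 h2
    · rintro h S h1 h2
      exact h S.1 ⟨h1, h2⟩
  have a00 : ∀ u v, ¬ G.Adj (Sum.inl u) (Sum.inl v) := by
    intro u v; simp [hG]
  have a01 : ∀ u l, G.Adj (Sum.inl u) (Sum.inr (Sum.inl l)) := by
    intro u v; simp [hG, gammaRel]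
  have a02 : ∀ u x, ¬ G.Adj (Sum.inl u) (Sum.inr (Sum.inr x)) := by
    intro u v; simp [hG, gammaRel]
  have a11 : ∀ l m, G.Adj (Sum.inr (Sum.inl l)) (Sum.inr (Sum.inl m)) ↔ Par I l m := by
    intro l m
    have h1 := B.irrefl l
    have : Par I m l ↔ Par I l m := ⟨Par.symm, Par.symm⟩
    simp only [hG, SimpleGraph.fromRel_adj, gammaRel, ← hpar, this, or_self]
    constructor
    · exact fun h => h.2
    · refine fun h => ⟨?_, h⟩
      rintro h2
      simp at h2
      subst h2
      exact h1 h
  have a12 : ∀ l x, G.Adj (Sum.inr (Sum.inl l)) (Sum.inr (Sum.inr x)) ↔ I (π x) l := by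
    intro l x; simp [hG, gammaRel, hI, hπ, piMap]
  have a22 : ∀ x y, G.Adj (Sum.inr (Sum.inr x)) (Sum.inr (Sum.inr y)) ↔ H.Adj x y := by
    intro x y
    simp only [hG, SimpleGraph.fromRel_adj, gammaRel, H.adj_comm y x, or_self]
    refine ⟨fun h => h.2, fun h => ⟨?_, h⟩⟩
    simpa using h.ne
  have a10 : ∀ u l, G.Adj (Sum.inr (Sum.inl l)) (Sum.inl u) := fun u l => (a01 u l).symm
  have a20 : ∀ u x, ¬ G.Adj (Sum.inr (Sum.inr x)) (Sum.inl u) := fun u x h => a02 u x h.symm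
  have a21 : ∀ l x, G.Adj (Sum.inr (Sum.inr x)) (Sum.inr (Sum.inl l)) ↔ I (π x) l := by
    intro l x; rw [G.adj_comm, a12]
  have hcn : ∀ v w, Fintype.card (G.commonNeighbors v w) = Nat.card {z // G.Adj v z ∧ G.Adj w z} := by
    intro v w; rw [← Nat.card_eq_fintype_card]; rfl
  have swap : ∀ v w, Nat.card {z // G.Adj v z ∧ G.Adj w z} = Nat.card {z // G.Adj w z ∧ G.Adj v z} := by
    intro v w; simp only [and_comm]
  -- common neighbour counts
  have n01 : ∀ u l, Nat.card {z // G.Adj (Sum.inl u) z ∧ G.Adj (Sum.inr (Sum.inl l)) z} = q - 1 := by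
    intro u l
    rw [count_sum]
    simp [a01, a02, a11, B.par_card]
  have n02 : ∀ u x, Nat.card {z // G.Adj (Sum.inl u) z ∧ G.Adj (Sum.inr (Sum.inr x)) z} = q + 1 := by
    intro u x
    rw [count_sum]
    simp [a01, a02, a21, B.thru]
  have n11 : ∀ l m, Par I l m →
      Nat.card {z // G.Adj (Sum.inr (Sum.inl l)) z ∧ G.Adj (Sum.inr (Sum.inl m)) z} = q - 1 := by
    intro l m h
    rw [count_sum]
    simp only [a10, a11, a12, B.par_par h, C.pull (fun S => I S l ∧ I S m)]
    have : Finset.card {S | I S l ∧ I S m} = 0 := by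
      rw [Finset.card_eq_zero, Finset.filter_eq_empty_iff]
      rintro S - ⟨h1, h2⟩
      exact h S h1 h2
    rw [this]
    simp
    omega
  have n11' : ∀ l m, l ≠ m → ¬ Par I l m →
      Nat.card {z // G.Adj (Sum.inr (Sum.inl l)) z ∧ G.Adj (Sum.inr (Sum.inl m)) z} = q + 1 := by
    intro l m hne h
    rw [count_sum]
    simp only [a10, a11, a12, B.not_par_par hne h, C.pull (fun S => I S l ∧ I S m),
      B.meet_card hne h]
    simp
    omega
  have n12 : ∀ l x, I (π x) l →
      Nat.card {z // G.Adj (Sum.inr (Sum.inl l)) z ∧ G.Adj (Sum.inr (Sum.inr x)) z} = q - 1 := by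
    intro l x h
    rw [count_sum]
    simp only [a10, a11, a12, a20, a21, a22, C.nbr x (fun S => I S l), B.del h]
    have : Finset.card {m | Par I l m ∧ I (π x) m} = 0 := by
      rw [Finset.card_eq_zero, Finset.filter_eq_empty_iff]
      rintro m - ⟨h1, h2⟩
      exact h1 _ h h2
    rw [this]
    simp only [and_false, if_false, zero_add]
    rw [← B.del h]
    congr!
  have n12' : ∀ l x, ¬ I (π x) l →
      Nat.card {z // G.Adj (Sum.inr (Sum.inl l)) z ∧ G.Adj (Sum.inr (Sum.inr x)) z} = q + 1 := by
    intro l x h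
    rw [count_sum]
    simp only [a10, a11, a12, a20, a21, a22, C.nbr x (fun S => I S l)]
    have e1 : Finset.card {m | Par I l m ∧ I (π x) m} = 1 := by
      rw [← B.playfair h]
      simp only [and_comm]
    have e2 : Finset.card {S | S ≠ π x ∧ I S l} = q := by
      rw [← B.hl l]
      congr 1
      ext S
      simp only [Finset.mem_filter, Finset.mem_univ, true_and]
      grind
    rw [e1, e2]
    simp
    omega
  have n22 : ∀ x y, H.Adj x y →
      Nat.card {z // G.Adj (Sum.inr (Sum.inr x)) z ∧ G.Adj (Sum.inr (Sum.inr y)) z} = q - 1 := by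
    intro x y h
    rw [count_sum]
    simp only [a20, a21, a22, B.hu _ _ (C.ne _ _ h), C.adj _ _ h]
    simp
    omega
  have n22' : ∀ x y, x ≠ y → ¬ H.Adj x y →
      Nat.card {z // G.Adj (Sum.inr (Sum.inr x)) z ∧ G.Adj (Sum.inr (Sum.inr y)) z} = q + 1 := by
    intro x y hne h
    rw [count_sum]
    by_cases hp : π x = π y
    · simp only [a20, a21, a22, C.same _ _ hne hp, hp, and_self, B.thru]
      simp
    · simp only [a20, a21, a22, B.hu _ _ hp, C.nadj _ _ h hp]
      simp
      omega
  refine ⟨?_, ?_, ?_, ?_⟩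
  · rw [← Nat.card_eq_fintype_card, Nat.card_sum, Nat.card_sum, Nat.card_eq_fintype_card,
      Nat.card_eq_fintype_card, Nat.card_eq_fintype_card, B.lines, C.card]
    simp
    ring
  · intro z
    have : G.degree z = Nat.card {w // G.Adj z w} := by
      rw [← G.card_neighborSet_eq_degree, ← Nat.card_eq_fintype_card]; rfl
    rw [this, count_sum]
    rcases z with u | l | x
    · simp [a01, a02, B.lines]
    · simp only [a10, a11, a12, B.par_card, C.pull (fun S => I S l), B.hl, if_true]
      rw [pow_two]
      omega
    · have e := C.deg x
      have : 1 ≤ q ^ 2 := Nat.one_le_pow _ _ (by omega)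
      simp only [a20, a21, a22, B.thru, e, if_false]
      omega
  · intro v w h
    rw [hcn]
    rcases v with u | l | x <;> rcases w with u' | m | y
    · exact absurd h (a00 _ _)
    · exact n01 _ _
    · exact absurd h (a02 _ _)
    · rw [swap]; exact n01 _ _
    · exact n11 _ _ ((a11 _ _).1 h)
    · exact n12 _ _ ((a12 _ _).1 h)
    · exact absurd h (a20 _ _)
    · rw [swap]; exact n12 _ _ ((a21 _ _).1 h)
    · exact n22 _ _ ((a22 _ _).1 h)
  · intro v w hne h
    rw [hcn]
    rcases v with u | l | x <;> rcases w with u' | m | y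
    · exact absurd rfl hne
    · exact absurd (a01 _ _) h
    · exact n02 _ _
    · exact absurd (a10 _ _) h
    · exact n11' _ _ (by rintro rfl; exact hne rfl) (fun h' => h ((a11 _ _).2 h'))
    · exact n12' _ _ (fun h' => h ((a12 _ _).2 h'))
    · rw [swap]; exact n02 _ _
    · rw [swap]; exact n12' _ _ (fun h' => h ((a21 _ _).2 h'))
    · exact n22' _ _ (by rintro rfl; exact hne rfl) (fun h' => h ((a22 _ _).2 h'))
end

section
/- Let q ≥ 2, let Γ be a strongly regular graph with parameters (q³+q²+q+1, q²+q, q−1, q+1), and let v be a regular point of Γ (with s = t = q). Then the subgraph induced on the set of vertices distinct from v and not adjacent to v is a distance-regular graph with intersection array {q²−1, q²−q, 1; 1, q, q²−1}. -/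
open scoped Classical

open Finset in
lemma aux_sum_one {α : Type*} (s : Finset α) (f : α → ℕ) (hle : ∀ a ∈ s, f a ≤ 1)
    (hs : ∑ a ∈ s, f a = s.card) : ∀ a ∈ s, f a = 1 := by
  have := (Finset.sum_eq_sum_iff_of_le (g := fun _ => 1) hle).1 (by simpa using hs)
  exact this

lemma aux_drg {W : Type} [Fintype W] (H : SimpleGraph W) (q : ℕ) (hq : 2 ≤ q)
    (r : W → W → Prop) (hr : Equivalence r)
    (hW : Fintype.card W = q ^ 3)
    (hdeg : ∀ x, (Finset.univ.filter (fun z => H.Adj x z)).card = q ^ 2 - 1)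
    (hcls : ∀ x, (Finset.univ.filter (fun z => r x z)).card = q)
    (hra : ∀ x y, H.Adj x y → ¬ r x y)
    (h1 : ∀ x y, H.Adj x y →
      (Finset.univ.filter (fun z => H.Adj x z ∧ H.Adj y z)).card = q - 2)
    (h2 : ∀ x y, ¬ H.Adj x y → ¬ r x y →
      (Finset.univ.filter (fun z => H.Adj x z ∧ H.Adj y z)).card = q)
    (h3 : ∀ x y, x ≠ y → r x y → ∀ z, H.Adj x z → H.Adj y z → False) :
    IsDRG3 H (q ^ 2 - 1) (q ^ 2 - q) 1 1 q (q ^ 2 - 1) := by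
  have hq2 : q * 2 ≤ q ^ 2 := by nlinarith
  -- reachability / distances
  have hw2 : ∀ x y, ¬ H.Adj x y → ¬ r x y → ∃ z, H.Adj x z ∧ H.Adj z y := by
    intro x y ha hn
    have : 0 < (Finset.univ.filter (fun z => H.Adj x z ∧ H.Adj y z)).card := by
      rw [h2 x y ha hn]; omega
    obtain ⟨z, hz⟩ := Finset.card_pos.1 this
    simp only [Finset.mem_filter, Finset.mem_univ, true_and] at hz
    exact ⟨z, hz.1, hz.2.symm⟩
  have hnb : ∀ x, ∃ z, H.Adj x z := by
    intro x
    have : 0 < (Finset.univ.filter (fun z => H.Adj x z)).card := by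
      rw [hdeg]; omega
    obtain ⟨z, hz⟩ := Finset.card_pos.1 this
    exact ⟨z, by simpa using hz⟩
  have hd2le : ∀ x y, ¬ r x y → ∃ p : H.Walk x y, p.length ≤ 2 := by
    intro x y hn
    by_cases ha : H.Adj x y
    · exact ⟨.cons ha .nil, by simp⟩
    · obtain ⟨z, hz, hz'⟩ := hw2 x y ha hn
      exact ⟨.cons hz (.cons hz' .nil), by simp⟩
  have hd3le : ∀ x y, ∃ p : H.Walk x y, p.length ≤ 3 := by
    intro x y
    by_cases hn : r x y
    · obtain ⟨z, hz⟩ := hnb x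
      have : ¬ r z y := fun h => hra x z hz (hr.trans hn (hr.symm h))
      obtain ⟨p, hp⟩ := hd2le z y this
      exact ⟨.cons hz p, by simp only [SimpleGraph.Walk.length_cons]; omega⟩
    · obtain ⟨p, hp⟩ := hd2le x y hn
      exact ⟨p, by omega⟩
  have hWpos : 0 < Fintype.card W := by rw [hW]; positivity
  obtain ⟨w0⟩ := Fintype.card_pos_iff.1 hWpos
  have hconn : H.Connected :=
    { preconnected := fun x y => (hd3le x y).elim fun p _ => ⟨p⟩
      nonempty := ⟨w0⟩ }
  have hdist3 : ∀ x y, H.dist x y ≤ 3 := fun x y => by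
    obtain ⟨p, hp⟩ := hd3le x y
    exact (SimpleGraph.dist_le p).trans hp
  have hdist2 : ∀ x y, ¬ r x y → H.dist x y ≤ 2 := fun x y hn => by
    obtain ⟨p, hp⟩ := hd2le x y hn
    exact (SimpleGraph.dist_le p).trans hp
  have e0 : ∀ x y, H.dist x y = 0 ↔ x = y := fun x y => by
    rw [hconn.dist_eq_zero_iff]
  have e1 : ∀ x y, H.dist x y = 1 ↔ H.Adj x y := fun x y => SimpleGraph.dist_eq_one_iff_adj
  have e2' : ∀ x y, H.dist x y = 2 → ¬ r x y := by
    intro x y h hxy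
    obtain ⟨p, hp⟩ := (hconn x y).exists_walk_length_eq_dist
    rw [h] at hp
    match p, hp with
    | .cons a (.cons b .nil), _ =>
      have hne : x ≠ y := fun hh => by
        have := (e0 x y).2 hh
        omega
      exact h3 x y hne hxy _ a b.symm
  have e2 : ∀ x y, H.dist x y = 2 ↔ (x ≠ y ∧ ¬ H.Adj x y ∧ ¬ r x y) := by
    intro x y
    constructor
    · intro h
      refine ⟨fun hh => ?_, fun hh => ?_, e2' x y h⟩
      · have := (e0 x y).2 hh
        omega
      · have := (e1 x y).2 hh
        omega
    · rintro ⟨ha, hb, hc⟩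
      have := hdist2 x y hc
      have := mt (e0 x y).1 ha
      have := mt (e1 x y).1 hb
      omega
  have e3 : ∀ x y, H.dist x y = 3 ↔ (x ≠ y ∧ r x y) := by
    intro x y
    constructor
    · intro h
      refine ⟨fun hh => ?_, ?_⟩
      · have := (e0 x y).2 hh
        omega
      · by_contra hh
        have := hdist2 x y hh
        omega
    · rintro ⟨ha, hb⟩
      have := hdist3 x y
      have := mt (e0 x y).1 ha
      have := mt (e1 x y).1 (fun h => hra _ _ h hb)
      have := mt (e2' x y) (fun h => h hb)
      omega
  -- each vertex has exactly one neighbour in each other class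
  have hone : ∀ u w, ¬ r u w →
      (Finset.univ.filter (fun y => r u y ∧ H.Adj w y)).card = 1 := by
    intro u
    have key := aux_sum_one (Finset.univ.filter (fun w => ¬ r u w))
      (fun w => (Finset.univ.filter (fun y => r u y ∧ H.Adj w y)).card) ?_ ?_
    · intro w hw
      exact key w (by simpa using hw)
    · intro w _
      rw [Finset.card_le_one]
      intro a ha b hb
      simp only [Finset.mem_filter, Finset.mem_univ, true_and] at ha hb
      by_contra hab
      exact h3 a b hab (hr.trans (hr.symm ha.1) hb.1) w ha.2.symm hb.2.symm
    · have hsw := Finset.sum_card_bipartiteAbove_eq_sum_card_bipartiteBelow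
        (s := Finset.univ.filter (fun w => ¬ r u w)) (t := Finset.univ.filter (fun y => r u y))
        (fun w y => H.Adj w y)
      have hL : ∀ w, (Finset.univ.filter (fun y => r u y ∧ H.Adj w y)).card =
          (Finset.bipartiteAbove (fun w y => H.Adj w y)
            (Finset.univ.filter (fun y => r u y)) w).card := by
        intro w
        rw [Finset.bipartiteAbove, Finset.filter_filter]
      simp only [hL]
      rw [hsw]
      have hR : ∀ y ∈ Finset.univ.filter (fun y => r u y),
          (Finset.bipartiteBelow (fun w y => H.Adj w y)
            (Finset.univ.filter (fun w => ¬ r u w)) y).card = q ^ 2 - 1 := by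
        intro y hy
        simp only [Finset.mem_filter, Finset.mem_univ, true_and] at hy
        rw [← hdeg y]
        congr 1
        ext z
        simp only [Finset.mem_bipartiteBelow, Finset.mem_filter, Finset.mem_univ, true_and]
        constructor
        · exact fun h => h.2.symm
        · exact fun h => ⟨fun hz => hra y z h (hr.trans (hr.symm hy) hz), h.symm⟩
      rw [Finset.sum_congr rfl hR, Finset.sum_const, hcls]
      have := Finset.card_filter_add_card_filter_not (s := (Finset.univ : Finset W))
        (fun w => r u w)
      rw [hcls, Finset.card_univ, hW] at this
      have h4 : q * (q ^ 2 - 1) + q = q ^ 3 := by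
        have : 1 ≤ q ^ 2 := by omega
        obtain ⟨m, hm⟩ := Nat.exists_eq_add_of_le this
        rw [show q ^ 3 = q * q ^ 2 by ring, hm]
        simp
        ring
      simp only [smul_eq_mul]
      omega
  have hnc : ∀ (p : W → Prop) [DecidablePred p], {y | p y}.ncard = (Finset.univ.filter p).card := by
    intro p _
    rw [← Set.ncard_coe_finset]
    congr 1
    ext; simp
  refine ⟨hconn, hdist3, ?_, ?_, ?_, ?_, ?_⟩
  · have : 1 < (Finset.univ.filter (fun z => r w0 z)).card := by rw [hcls]; omega
    obtain ⟨a, ha, b, hb, hab⟩ := Finset.one_lt_card.1 this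
    simp only [Finset.mem_filter, Finset.mem_univ, true_and] at ha hb
    exact ⟨a, b, (e3 a b).2 ⟨hab, hr.trans (hr.symm ha) hb⟩⟩
  · intro x
    rw [← hdeg x]
    exact hnc _
  · intro u w h
    rw [e1] at h
    rw [hnc, hnc]
    constructor
    · rw [Finset.card_eq_one]
      refine ⟨u, ?_⟩
      ext y
      simp only [e0, Finset.mem_filter, Finset.mem_univ, true_and, Finset.mem_singleton]
      constructor
      · exact fun h => h.2.symm
      · rintro rfl
        exact ⟨h.symm, rfl⟩
    · have hsplit : Finset.univ.filter (fun z => H.Adj w z) =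
          insert u (Finset.univ.filter (fun y => H.Adj w y ∧ H.dist u y = 2) ∪
            Finset.univ.filter (fun z => H.Adj u z ∧ H.Adj w z)) := by
        ext y
        simp only [e2, Finset.mem_filter, Finset.mem_univ, true_and, Finset.mem_insert,
          Finset.mem_union]
        constructor
        · intro hy
          by_cases hu : y = u
          · exact Or.inl hu
          · right
            by_cases ha : H.Adj u y
            · exact Or.inr ⟨ha, hy⟩
            · exact Or.inl ⟨hy, fun h => hu h.symm, ha,
                fun hh => h3 u y (fun h => hu h.symm) hh w h hy.symm⟩
        · rintro (rfl | h | h)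
          · exact h.symm
          · exact h.1
          · exact h.2
      have hc := congrArg Finset.card hsplit
      rw [hdeg, Finset.card_insert_of_notMem, Finset.card_union_of_disjoint, h1 u w h] at hc
      · omega
      · rw [Finset.disjoint_left]
        intro y
        simp only [e2, Finset.mem_filter, Finset.mem_univ, true_and]
        exact fun h h' => h.2.2.1 h'.1
      · simp [e2]
  · intro u w h
    rw [e2] at h
    rw [hnc, hnc]
    constructor
    · rw [← h2 u w h.2.1 h.2.2]
      congr 1
      ext y
      simp only [e1, Finset.mem_filter, Finset.mem_univ, true_and]
      exact and_comm
    · rw [← hone u w h.2.2]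
      congr 1
      ext y
      simp only [e3, Finset.mem_filter, Finset.mem_univ, true_and]
      constructor
      · exact fun h => ⟨h.2.2, h.1⟩
      · refine fun hh => ⟨hh.2, ?_, hh.1⟩
        rintro rfl
        exact h.2.1 hh.2.symm
  · intro u w h
    rw [e3] at h
    rw [hnc, hnc]
    constructor
    · rw [← hdeg w]
      congr 1
      ext y
      simp only [e2, Finset.mem_filter, Finset.mem_univ, true_and]
      constructor
      · exact fun h => h.1
      · refine fun hy => ⟨hy, ?_, ?_, ?_⟩
        · rintro rfl
          exact hra _ _ hy (hr.symm h.2)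
        · exact fun ha => h3 u w h.1 h.2 y ha hy
        · exact fun hh => hra _ _ hy (hr.trans (hr.symm h.2) hh)
    · rw [Finset.card_eq_zero, Finset.filter_eq_empty_iff]
      intro y _ hy
      have := hdist3 u y
      omega

lemma aux_sub {V : Type} [Fintype V] (P p : V → Prop) (F : Fintype {x : V | P x})
    (d : DecidablePred fun z : {x : V | P x} => p z)
    [d2 : DecidablePred fun z => P z ∧ p z] :
    (Finset.univ.filter (fun z : {x : V | P x} => p z)).card =
      (Finset.univ.filter (fun z : V => P z ∧ p z)).card := by
  rw [← Finset.card_map (Function.Embedding.subtype _)]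
  congr 1
  ext z
  simp only [Finset.mem_map, Finset.mem_filter, Finset.mem_univ, true_and]
  constructor
  · rintro ⟨a, ha, rfl⟩
    exact ⟨a.2, ha⟩
  · exact fun h => ⟨⟨z, h.1⟩, h.2, rfl⟩

/-- Let `q ≥ 2`, `Γ` strongly regular with parameters
`(q³+q²+q+1, q²+q, q−1, q+1)`, and `v` a regular point (with `s = t = q`). Then the
subgraph induced on the vertices distinct from `v` and not adjacent to `v` is
distance-regular with intersection array `{q²−1, q²−q, 1; 1, q, q²−1}`. -/
theorem secondSubconstituent_of_regularPoint_DRG {V : Type} [Fintype V]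
    (q : ℕ) (hq : 2 ≤ q) (G : SimpleGraph V)
    (hG : G.IsSRGWith (q ^ 3 + q ^ 2 + q + 1) (q ^ 2 + q) (q - 1) (q + 1))
    (v : V) (hreg : IsRegularPoint G q v) :
    IsDRG3 (G.induce {x : V | x ≠ v ∧ ¬ G.Adj v x})
      (q ^ 2 - 1) (q ^ 2 - q) 1 1 q (q ^ 2 - 1) := by
  have hq2 : q * 2 ≤ q ^ 2 := by nlinarith
  have hcard : (Finset.univ : Finset V).card = q ^ 3 + q ^ 2 + q + 1 := by
    rw [Finset.card_univ]; exact hG.card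
  have hdeg : ∀ x, (Finset.univ.filter (fun z => G.Adj x z)).card = q ^ 2 + q := by
    intro x
    rw [← hG.regular x, ← SimpleGraph.card_neighborFinset_eq_degree]
    congr 1
    ext; simp
  have hcn : ∀ x y, (Finset.univ.filter (fun z => G.Adj x z ∧ G.Adj y z)).card =
      Fintype.card (G.commonNeighbors x y) := by
    intro x y
    rw [← Set.toFinset_card]
    congr 1
    ext; simp [SimpleGraph.mem_commonNeighbors]
  have hadj : ∀ x y, G.Adj x y →
      (Finset.univ.filter (fun z => G.Adj x z ∧ G.Adj y z)).card = q - 1 := by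
    intro x y h
    rw [hcn, ← hG.of_adj x y h]
  have hnadj : ∀ x y, x ≠ y → ¬ G.Adj x y →
      (Finset.univ.filter (fun z => G.Adj x z ∧ G.Adj y z)).card = q + 1 := by
    intro x y h h'
    rw [hcn, ← hG.of_not_adj h h']
  have htr : ∀ a b c, G.Adj v a → G.Adj v b → G.Adj v c → G.Adj a b → G.Adj b c → a ≠ c →
      G.Adj a c := by
    intro a b c ha hb hc hab hbc hac
    have := hreg.1.trans (x := ⟨a, ha⟩) (y := ⟨b, hb⟩) (z := ⟨c, hc⟩) (Or.inr hab) (Or.inr hbc)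
    rcases this with h | h
    · exact absurd (congrArg Subtype.val h) hac
    · exact h
  obtain ⟨P, hP⟩ : ∃ P : V → Prop, P = fun x => x ≠ v ∧ ¬ G.Adj v x := ⟨_, rfl⟩
  obtain ⟨T, hT⟩ : ∃ T : V → Finset V,
    T = fun x => Finset.univ.filter (fun a => G.Adj v a ∧ G.Adj x a) := ⟨_, rfl⟩
  have mT : ∀ x a, a ∈ T x ↔ G.Adj v a ∧ G.Adj x a := by intro x a; simp [hT]
  have cT : ∀ x, P x → (T x).card = q + 1 := by
    intro x hx
    rw [hP] at hx
    rw [hT]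
    exact hnadj v x hx.1.symm hx.2
  have L1 : ∀ x a b, P x → a ∈ T x → b ∈ T x → ¬ G.Adj a b := by
    intro x a b hx ha hb hab
    rw [mT] at ha hb
    rw [hP] at hx
    have hsub : insert v ((Finset.univ.filter (fun z => G.Adj v z ∧ G.Adj a z)).erase b) ⊆
        Finset.univ.filter (fun z => G.Adj a z ∧ G.Adj b z) := by
      intro z
      simp only [Finset.mem_insert, Finset.mem_erase, Finset.mem_filter, Finset.mem_univ, true_and]
      rintro (rfl | ⟨h, h', h''⟩)
      · exact ⟨ha.1.symm, hb.1.symm⟩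
      · exact ⟨h'', (htr z a b h' ha.1 hb.1 h''.symm hab h).symm⟩
    have heq := Finset.eq_of_subset_of_card_le hsub (by
      rw [Finset.card_insert_of_notMem (by simp), Finset.card_erase_of_mem (by simp [hb.1, hab]),
        hadj a b hab, hadj v a ha.1]
      omega)
    have hxm : x ∈ Finset.univ.filter (fun z => G.Adj a z ∧ G.Adj b z) := by
      simp [ha.2.symm, hb.2.symm]
    rw [← heq] at hxm
    simp only [Finset.mem_insert, Finset.mem_erase, Finset.mem_filter, Finset.mem_univ,
      true_and] at hxm
    rcases hxm with h | h
    · exact hx.1 h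
    · exact hx.2 h.2.1
  have hpp : ∀ x, P x → perp G {v, x} = (T x : Set V) := by
    intro x hx
    rw [hP] at hx
    ext w
    simp only [perp, Set.mem_ofPred_eq, Set.mem_insert_iff, Set.mem_singleton_iff,
      forall_eq_or_imp, forall_eq, Finset.mem_coe, mT]
    constructor
    · rintro ⟨h | h, h' | h'⟩
      · exact absurd (h'.symm.trans h) hx.1
      · subst h; exact absurd h' hx.2
      · subst h'; exact absurd h.symm hx.2
      · exact ⟨h.symm, h'.symm⟩
    · exact fun h => ⟨Or.inr h.1.symm, Or.inr h.2.symm⟩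
  have hspan : ∀ x, P x → perp G (perp G {v, x}) =
      ((insert v (Finset.univ.filter (fun w => P w ∧ T x = T w)) : Finset V) : Set V) := by
    intro x hx
    have hco := (hreg.2 x (by rw [hP] at hx; exact hx.1) (by rw [hP] at hx; exact hx.2)).2
    have hv : v ∈ perp G (perp G {v, x}) := by
      rw [hpp x hx]
      intro a ha
      exact Or.inr ((mT x a).1 ha).1
    ext w
    constructor
    · intro hw
      have hvw := hco v hv w hw
      rw [hpp x hx] at hw
      simp only [Finset.coe_insert, Finset.coe_filter, Finset.mem_univ, true_and,
        Set.mem_insert_iff, Set.mem_ofPred_eq]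
      by_cases hwv : w = v
      · exact Or.inl hwv
      · right
        have hPw : P w := by rw [hP]; exact ⟨hwv, hvw⟩
        refine ⟨hPw, Finset.eq_of_subset_of_card_le ?_ (by rw [cT x hx, cT w hPw])⟩
        intro a ha
        have ha' := (mT x a).1 ha
        rw [mT]
        refine ⟨ha'.1, ?_⟩
        rcases hw a ha with h | h
        · subst h; exact absurd ha'.1 hvw
        · exact h
    · intro hw
      simp only [Finset.coe_insert, Finset.coe_filter, Finset.mem_univ, true_and,
        Set.mem_insert_iff, Set.mem_ofPred_eq] at hw
      rcases hw with h | ⟨h, h'⟩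
      · rw [h]; exact hv
      · rw [hpp x hx]
        intro a ha
        rw [h'] at ha
        exact Or.inr ((mT w a).1 ha).2
  have hPv : ¬ P v := by rw [hP]; simp
  have hcls : ∀ x, P x → (Finset.univ.filter (fun w => P w ∧ T x = T w)).card = q := by
    intro x hx
    have h := (hreg.2 x (by rw [hP] at hx; exact hx.1) (by rw [hP] at hx; exact hx.2)).1
    rw [hspan x hx, Set.ncard_coe_finset, Finset.card_insert_of_notMem (by simp [hPv])] at h
    omega
  have hcoc : ∀ x y, P x → P y → T x = T y → ¬ G.Adj x y := by
    intro x y hx hy h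
    have hco := (hreg.2 x (by rw [hP] at hx; exact hx.1) (by rw [hP] at hx; exact hx.2)).2
    rw [hspan x hx] at hco
    exact hco x (by simp [hx]) y (by simp [hy, h])
  have L3 : ∀ x y, P x → P y → T x ≠ T y → (T x ∩ T y).card ≤ 1 := by
    intro x y hx hy hne
    rw [Finset.card_le_one]
    intro a ha b hb
    by_contra hab
    rw [Finset.mem_inter] at ha hb
    have hnab := L1 x a b hx ha.1 hb.1
    have hsub : insert v (Finset.univ.filter (fun w => P w ∧ T x = T w)) ⊆
        Finset.univ.filter (fun z => G.Adj a z ∧ G.Adj b z) := by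
      intro z
      simp only [Finset.mem_insert, Finset.mem_filter, Finset.mem_univ, true_and]
      rintro (rfl | ⟨_, h⟩)
      · exact ⟨((mT _ _).1 ha.1).1.symm, ((mT _ _).1 hb.1).1.symm⟩
      · rw [h] at ha hb
        exact ⟨((mT _ _).1 ha.1).2.symm, ((mT _ _).1 hb.1).2.symm⟩
    have heq := Finset.eq_of_subset_of_card_le hsub (by
      rw [Finset.card_insert_of_notMem (by simp [hPv]), hcls x hx, hnadj a b hab hnab])
    have hym : y ∈ Finset.univ.filter (fun z => G.Adj a z ∧ G.Adj b z) := by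
      simp [((mT _ _).1 ha.2).2.symm, ((mT _ _).1 hb.2).2.symm]
    rw [← heq] at hym
    simp only [Finset.mem_insert, Finset.mem_filter, Finset.mem_univ, true_and] at hym
    rcases hym with h | h
    · rw [h] at hy; exact hPv hy
    · exact hne h.2
  have hD : (Finset.univ.filter (fun x => P x)).card = q ^ 3 := by
    have h1 := Finset.card_filter_add_card_filter_not (s := (Finset.univ : Finset V))
      (fun x => P x)
    have h2 : Finset.univ.filter (fun x => ¬ P x) =
        insert v (Finset.univ.filter (fun z => G.Adj v z)) := by
      ext z
      simp only [hP, Finset.mem_insert, Finset.mem_filter, Finset.mem_univ, true_and]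
      tauto
    rw [h2, Finset.card_insert_of_notMem (by simp), hdeg, hcard] at h1
    omega
  have hNa : ∀ a, G.Adj v a → (Finset.univ.filter (fun y => P y ∧ G.Adj y a)).card = q ^ 2 := by
    intro a ha
    have h2 : Finset.univ.filter (fun z => G.Adj a z) =
        insert v (Finset.univ.filter (fun z => G.Adj v z ∧ G.Adj a z) ∪
          Finset.univ.filter (fun y => P y ∧ G.Adj y a)) := by
      ext z
      simp only [hP, Finset.mem_insert, Finset.mem_filter, Finset.mem_univ, true_and,
        Finset.mem_union, G.adj_comm z a]
      constructor
      · intro h; tauto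
      · rintro (rfl | h | h)
        · exact ha.symm
        · exact h.2
        · exact h.2
    have hc := congrArg Finset.card h2
    rw [hdeg, Finset.card_insert_of_notMem (by simp [hPv]), Finset.card_union_of_disjoint,
      hadj v a ha] at hc
    · omega
    · rw [Finset.disjoint_left]
      intro y
      simp only [hP, Finset.mem_filter, Finset.mem_univ, true_and]
      exact fun h h' => h'.1.2 h.1
  have L4 : ∀ x y, P x → P y → T x ≠ T y → (T x ∩ T y).card = 1 := by
    intro x y hx hy hne
    refine aux_sum_one (Finset.univ.filter (fun y => P y ∧ ¬ T x = T y))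
      (fun y => (T x ∩ T y).card) ?_ ?_ y (by simp [hy, hne])
    · intro z hz
      simp only [Finset.mem_filter, Finset.mem_univ, true_and] at hz
      exact L3 x z hx hz.1 hz.2
    · have hsw := Finset.sum_card_bipartiteAbove_eq_sum_card_bipartiteBelow
        (s := Finset.univ.filter (fun w => P w)) (t := T x)
        (fun w a => G.Adj w a)
      have hL : ∀ w, Finset.bipartiteAbove (fun w a => G.Adj w a) (T x) w = T x ∩ T w := by
        intro w
        ext a
        simp only [Finset.mem_bipartiteAbove, Finset.mem_inter, mT]
        tauto
      have hR : ∀ a ∈ T x, (Finset.bipartiteBelow (fun w a => G.Adj w a)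
          (Finset.univ.filter (fun w => P w)) a).card = q ^ 2 := by
        intro a ha
        rw [← hNa a ((mT x a).1 ha).1, Finset.bipartiteBelow, Finset.filter_filter]
      simp only [hL] at hsw
      rw [Finset.sum_congr rfl hR, Finset.sum_const, cT x hx,
        ← Finset.sum_filter_add_sum_filter_not _ (fun w => T x = T w),
        Finset.filter_filter, Finset.filter_filter] at hsw
      have hS : ∀ w ∈ Finset.univ.filter (fun w => P w ∧ T x = T w), (T x ∩ T w).card = q + 1 := by
        intro w hw
        simp only [Finset.mem_filter, Finset.mem_univ, true_and] at hw
        rw [← hw.2, Finset.inter_self, cT x hx]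
      rw [Finset.sum_congr rfl hS, Finset.sum_const, hcls x hx] at hsw
      have hc := Finset.card_filter_add_card_filter_not
        (s := Finset.univ.filter (fun w => P w)) (fun w => T x = T w)
      rw [Finset.filter_filter, Finset.filter_filter, hcls x hx, hD] at hc
      simp only [smul_eq_mul] at hsw
      nlinarith
  -- counts inside the second subconstituent
  have hcT : ∀ x y, P x → 
      (Finset.univ.filter (fun z => P z ∧ G.Adj x z ∧ G.Adj y z)).card + (T x ∩ T y).card =
      (Finset.univ.filter (fun z => G.Adj x z ∧ G.Adj y z)).card := by
    intro x y hx
    rw [← Finset.card_union_of_disjoint]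
    · congr 1
      ext z
      simp only [Finset.mem_union, Finset.mem_inter, mT, Finset.mem_filter, Finset.mem_univ,
        true_and, hP]
      constructor
      · tauto
      · intro h
        have : z ≠ v := by
          rintro rfl
          rw [hP] at hx
          exact hx.2 h.1.symm
        tauto
    · rw [Finset.disjoint_left]
      intro z
      simp only [Finset.mem_inter, mT, Finset.mem_filter, Finset.mem_univ, true_and, hP]
      tauto
  have hPset : {x : V | x ≠ v ∧ ¬ G.Adj v x} = {x | P x} := by rw [hP]
  rw [hPset]
  refine aux_drg _ q hq (fun x y => T x = T y) ⟨fun _ => rfl, fun h => h.symm,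
    fun h h' => h.trans h'⟩ ?_ ?_ ?_ ?_ ?_ ?_ ?_
  · rw [← hD, ← Finset.card_univ]
    have := aux_sub P (fun _ => True) inferInstance inferInstance
    simpa using this
  · intro x
    have h := aux_sub P (fun z => G.Adj x z) inferInstance inferInstance
    have h2 := hcT x x x.2
    simp only [and_self, Finset.inter_self] at h2
    rw [cT x x.2, hdeg] at h2
    refine h.trans ?_
    omega
  · intro x
    exact (aux_sub P (fun z => T x = T z) _ _).trans (hcls x x.2)
  · intro x y h h'
    exact hcoc x y x.2 y.2 h' h
  · intro x y h
    have h' : G.Adj x y := h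
    have h2 := hcT x y x.2
    rw [L4 x y x.2 y.2 (fun hh => hcoc x y x.2 y.2 hh h'), hadj _ _ h'] at h2
    refine (aux_sub P (fun z => G.Adj x z ∧ G.Adj y z) inferInstance inferInstance).trans ?_
    omega
  · intro x y h hn
    have h' : ¬ G.Adj x y := h
    have h2 := hcT x y x.2
    have hne : (x : V) ≠ y := fun hh => hn (by rw [hh])
    rw [L4 x y x.2 y.2 hn, hnadj _ _ hne h'] at h2
    refine (aux_sub P (fun z => G.Adj x z ∧ G.Adj y z) inferInstance inferInstance).trans ?_
    omega
  · intro x y hne h z hxz hyz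
    have h1 : G.Adj x z := hxz
    have h1' : G.Adj y z := hyz
    have hne' : (x : V) ≠ y := fun hh => hne (Subtype.ext hh)
    have h2 := hcT x y x.2
    rw [← h, Finset.inter_self, cT x x.2,
      hnadj _ _ hne' (hcoc x y x.2 y.2 h)] at h2
    have h3 : (Finset.univ.filter (fun z => P z ∧ G.Adj x z ∧ G.Adj y z)).card = 0 := by omega
    rw [Finset.card_eq_zero, Finset.filter_eq_empty_iff] at h3
    exact h3 (Finset.mem_univ (z : V)) ⟨z.2, h1, h1'⟩
end
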